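/- Let C be a clutter and let I = I(C) ⊆ R be its edge ideal. If C is unmixed and has the max-flow min-cut property, then: (a) depth(R/I^k) ≥ depth(R/I^{k+1}) for all k ≥ 1; (b) reg(R/I^k) ≤ reg(R/I^{k+1}) for all k ≥ 1. -/

import Mathlib

/-!
Both assertions come from the equality `I^k = (I^(k+1) : x_e)` for a suitable edge `e`, together with
the fact that passing from a monomial ideal `I` to `(I : x_v)` neither lowers the depth nor raises the
regularity of the quotient.

*The colon equality* (`Clutter.exists_colon`). Take an optimal integral packing of edges for the weight
`α = 1`. Since the clutter is unmixed, every minimal cover is optimal, and complementary slackness shows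
that an edge `e` in the support of the packing meets each minimal cover in exactly one vertex. By the
max-flow min-cut property `I^k` consists of the polynomials whose monomials have weight at least `k` on
every minimal cover. Multiplication by `x_e` raises each of these weights by exactly one. If there are no
edges, then `I = 0` and there is nothing to prove.

*One variable* (`Colon.hv_colon`). For a monomial ideal `I` there is an exact sequence
`0 → R/(I : x_v)(-1) → R/I → R/(I, x_v) → 0`. Deleting the terms divisible by `x_v` makes `R/(I, x_v)` a
retract of `R/I` over the other variables, so that its Koszul homology vanishes where that of `R/I` does.
The long exact sequence then carries vanishing from `R/I` over to `R/(I : x_v)`. The colon by `x_e` is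
obtained by repeating this for each variable of `e` (`Reg.colon_induction`).

*Regularity* (`Reg.hv_of_resBound`, `Reg.resBound_of_hv`). There is a graded free resolution of `R/I` with
`F_i` generated in degrees at most `i + s` if and only if `H_i(x; R/I)_e = 0` for all `e > i + s`.

*Depth* (`Dep.ext_iff_hv`). `Ext^i(R/m, M) = 0` if and only if `H_{n-i}(x; M) = 0`, by dimension shifting
along embeddings into injective modules, whose Koszul homology is concentrated in degree `n`.
-/

open MvPolynomial CategoryTheory Opposite

noncomputable section

/-- The polynomial ring `K[x_v : v ∈ σ]` over the field `K`. -/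
abbrev MvPoly (K : Type) [Field K] (σ : Type) : Type := MvPolynomial σ K

variable (K : Type) [Field K] (σ : Type)

/-- The graded maximal ideal `m = (x_v : v ∈ σ)` generated by all the variables. -/
def maxIdeal : Ideal (MvPoly K σ) := Ideal.span (Set.range MvPolynomial.X)

/-- The depth of `R/I` with respect to the graded maximal ideal, defined as
`inf { i | Ext^i(R/m, R/I) ≠ 0 }` (with value `⊤` for the zero module). -/
def depthQ (I : Ideal (MvPoly K σ)) : ℕ∞ :=
  sInf { d : ℕ∞ | ∃ i : ℕ, d = i ∧
    Nontrivial (((Ext (MvPoly K σ) (ModuleCat (MvPoly K σ)) i).obj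
      (op (ModuleCat.of (MvPoly K σ) (MvPoly K σ ⧸ maxIdeal K σ)))).obj
      (ModuleCat.of (MvPoly K σ) (MvPoly K σ ⧸ I))) }

/-- The degree-`e` homogeneous component condition, for an integer `e`
(for `e < 0` the component is zero). -/
def HomogComp (e : ℤ) (p : MvPoly K σ) : Prop :=
  if 0 ≤ e then p ∈ homogeneousSubmodule σ K e.toNat else p = 0

/-- `v` is a homogeneous element of degree `e` of the graded free module
`⊕_j R(-dg j)`. -/
def IsHomogVec {m : ℕ} (dg : Fin m → ℤ) (e : ℤ) (v : Fin m → MvPoly K σ) : Prop :=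
  ∀ j, HomogComp K σ (e - dg j) (v j)

/-- The degree-`e` homogeneous component of `R/I`. -/
def QuotComp (I : Ideal (MvPoly K σ)) (e : ℤ) : Submodule K (MvPoly K σ ⧸ I) :=
  if 0 ≤ e then
    Submodule.map (Ideal.Quotient.mkₐ K I).toLinearMap (homogeneousSubmodule σ K e.toNat)
  else ⊥

/-- A graded free resolution of `R/I` by finitely generated graded free modules
`F i = ⊕_{j < rk i} R(-dg i j)`, with degree preserving (degree zero) maps. -/
structure GradedFreeRes (I : Ideal (MvPoly K σ)) where
  rk : ℕ → ℕ
  dg : (i : ℕ) → Fin (rk i) → ℤ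
  dmap : (i : ℕ) → ((Fin (rk (i + 1)) → MvPoly K σ) →ₗ[MvPoly K σ] (Fin (rk i) → MvPoly K σ))
  aug : (Fin (rk 0) → MvPoly K σ) →ₗ[MvPoly K σ] (MvPoly K σ ⧸ I)
  aug_surj : Function.Surjective aug
  exact0 : Function.Exact (dmap 0) aug
  exactS : ∀ i, Function.Exact (dmap (i + 1)) (dmap i)
  graded : ∀ i (e : ℤ) v, IsHomogVec K σ (dg (i + 1)) e v → IsHomogVec K σ (dg i) e (dmap i v)
  aug_graded : ∀ (e : ℤ) v, IsHomogVec K σ (dg 0) e v → aug v ∈ QuotComp K σ I e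

/-- `R/I` admits a graded free resolution all of whose twists `dg i j` satisfy
`dg i j - i ≤ r`. -/
def ResBound (I : Ideal (MvPoly K σ)) (r : ℤ) : Prop :=
  ∃ F : GradedFreeRes K σ I, ∀ i j, F.dg i j - i ≤ r

open Classical in
/-- The Castelnuovo–Mumford regularity of `R/I`: the least `r` bounding the twists of
a graded free resolution of `R/I` (with the convention `⊥ = -∞` for the zero module). -/
def CMreg (I : Ideal (MvPoly K σ)) : WithBot ℤ :=
  if h : ∃ r : ℤ, ResBound K σ I r ∧ ∀ s : ℤ, ResBound K σ I s → r ≤ s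
  then ((h.choose : ℤ) : WithBot ℤ) else ⊥

variable {n : ℕ}

/-- The monomial `x^a`. -/
def mono (K : Type) [Field K] {n : ℕ} (a : Fin n →₀ ℕ) : MvPoly K (Fin n) :=
  MvPolynomial.monomial a 1

/-- A monomial ideal: an ideal generated by monomials. -/
def IsMonomialIdeal (I : Ideal (MvPoly K (Fin n))) : Prop :=
  ∃ S : Set (Fin n →₀ ℕ), I = Ideal.span (mono K '' S)

/-- A squarefree exponent vector. -/
def SqfreeExp (a : Fin n →₀ ℕ) : Prop := ∀ i, a i ≤ 1

/-- A squarefree monomial ideal: an ideal generated by squarefree monomials. -/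
def IsSqfreeMonomialIdeal (I : Ideal (MvPoly K (Fin n))) : Prop :=
  ∃ S : Set (Fin n →₀ ℕ), (∀ a ∈ S, SqfreeExp a) ∧ I = Ideal.span (mono K '' S)

/-- A clutter on the vertex set `Fin n`: a family of edges none of which contains another. -/
structure Clutter (n : ℕ) where
  edges : Finset (Finset (Fin n))
  antichain : ∀ e ∈ edges, ∀ f ∈ edges, e ⊆ f → e = f

namespace Clutter

variable {n : ℕ}

/-- The edge ideal of a clutter, generated by the squarefree monomials
`x_e = ∏_{i ∈ e} x_i` for the edges `e`. -/
def edgeIdeal (K : Type) [Field K] (C : Clutter n) : Ideal (MvPoly K (Fin n)) :=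
  Ideal.span ((fun e : Finset (Fin n) => ∏ i ∈ e, (MvPolynomial.X i : MvPoly K (Fin n))) ''
    ↑C.edges)

/-- `c` is a vertex cover of `C`: it meets every edge. -/
def IsCover (C : Clutter n) (c : Finset (Fin n)) : Prop :=
  ∀ e ∈ C.edges, ∃ i ∈ e, i ∈ c

/-- `c` is a minimal vertex cover of `C`. -/
def IsMinCover (C : Clutter n) (c : Finset (Fin n)) : Prop :=
  IsCover C c ∧ ∀ d ⊆ c, IsCover C d → d = c

open Classical in
/-- The clutter of minimal vertex covers (the Alexander dual clutter `C^∨`). -/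
def dual (C : Clutter n) : Clutter n where
  edges := Finset.univ.filter fun c => IsMinCover C c
  antichain := by
    intro e he f hf hef
    simp only [Finset.mem_filter] at he hf
    exact hf.2.2 e hef he.2.1

/-- The ideal of covers (Alexander dual ideal) of a clutter: the edge ideal of `C^∨`. -/
def coverIdeal (K : Type) [Field K] (C : Clutter n) : Ideal (MvPoly K (Fin n)) :=
  edgeIdeal K (dual C)

open Classical in
/-- Deletion `C ∖ V`: delete all edges of `C` that intersect `V`. -/
def del (C : Clutter n) (V : Finset (Fin n)) : Clutter n where
  edges := C.edges.filter fun e => ∀ i ∈ V, i ∉ e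
  antichain := by
    intro e he f hf hef
    simp only [Finset.mem_filter] at he hf
    exact C.antichain e he.1 f hf.1 hef

/-- All minimal vertex covers of `C` have the same cardinality. -/
def Unmixed (C : Clutter n) : Prop :=
  ∀ c d, IsMinCover C c → IsMinCover C d → c.card = d.card

/-- All edges of `C` have the same cardinality. -/
def Uniform (C : Clutter n) : Prop :=
  ∀ e ∈ C.edges, ∀ f ∈ C.edges, e.card = f.card

/-- The set covering polyhedron `Q(A) = {x ∈ ℝ^n : x ≥ 0, xA ≥ 1}` of the clutter. -/
def coverPolyhedron (C : Clutter n) : Set (Fin n → ℝ) :=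
  { x | (∀ i, 0 ≤ x i) ∧ ∀ e ∈ C.edges, 1 ≤ ∑ i ∈ e, x i }

/-- The set covering polyhedron is integral: all of its vertices (extreme points)
have integer coordinates. -/
def IntegralPolyhedron (C : Clutter n) : Prop :=
  ∀ x ∈ Set.extremePoints ℝ (coverPolyhedron C), ∀ i, ∃ z : ℤ, x i = (z : ℝ)

open Classical in
/-- The max-flow min-cut property: for every nonnegative integral vector `α` both sides of
the LP-duality equation `min{⟨α,x⟩ : x ≥ 0, xA ≥ 1} = max{⟨y,1⟩ : y ≥ 0, Ay ≤ α}`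
have integral optimum solutions. -/
def HasMFMC (C : Clutter n) : Prop :=
  ∀ α : Fin n → ℕ,
    ∃ x : Fin n → ℕ,
      ((fun i => (x i : ℝ)) ∈ coverPolyhedron C ∧
        ∀ z ∈ coverPolyhedron C, ∑ i, (α i : ℝ) * x i ≤ ∑ i, (α i : ℝ) * z i) ∧
    ∃ y : Finset (Fin n) → ℕ,
      ((∀ e, e ∉ C.edges → y e = 0) ∧
        (∀ i, ∑ e ∈ C.edges.filter (fun e => i ∈ e), y e ≤ α i) ∧
        (∀ y' : Finset (Fin n) → ℝ, (∀ e, 0 ≤ y' e) → (∀ e, e ∉ C.edges → y' e = 0) →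
          (∀ i, ∑ e ∈ C.edges.filter (fun e => i ∈ e), y' e ≤ (α i : ℝ)) →
          ∑ e ∈ C.edges, y' e ≤ ∑ e ∈ C.edges, (y e : ℝ))) ∧
      (∑ i, (α i : ℝ) * x i = ∑ e ∈ C.edges, (y e : ℝ))

end Clutter

open Classical in
/-- The unique clutter whose edge ideal is a given squarefree monomial ideal `I`:
its edges are the minimal supports of squarefree monomials belonging to `I`. -/
def clutterOf (K : Type) [Field K] {n : ℕ} (I : Ideal (MvPoly K (Fin n))) : Clutter n where
  edges := Finset.univ.filter fun e =>
    ((∏ i ∈ e, MvPolynomial.X i : MvPoly K (Fin n)) ∈ I ∧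
      ∀ f ⊆ e, (∏ i ∈ f, MvPolynomial.X i : MvPoly K (Fin n)) ∈ I → f = e)
  antichain := by
    intro e he f hf hef
    simp only [Finset.mem_filter] at he hf
    exact hf.2.2 e hef he.2.1

/-- The Alexander dual of a squarefree monomial ideal. -/
def idealDual (K : Type) [Field K] {n : ℕ} (I : Ideal (MvPoly K (Fin n))) :
    Ideal (MvPoly K (Fin n)) :=
  Clutter.coverIdeal K (clutterOf K I)

end

set_option linter.unusedSectionVars false

/-! ### Koszul complexes -/

namespace Kos

variable {R : Type} [CommRing R]

/-- The underlying module of the Koszul complex `K(l; M)`: `2 ^ |l|` copies of `M`. For `x :: l` the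
first factor is the part without the exterior generator `e_x`, the second the coefficient of `e_x`. -/
def KV (M : Type) : List R → Type
  | [] => M
  | _ :: l => KV M l × KV M l

variable {M N P : Type} [AddCommGroup M] [Module R M] [AddCommGroup N] [Module R N]
  [AddCommGroup P] [Module R P]

instance instACG (M : Type) [AddCommGroup M] : (l : List R) → AddCommGroup (KV M l)
  | [] => inferInstanceAs (AddCommGroup M)
  | _ :: l => letI := instACG M l; inferInstanceAs (AddCommGroup (KV M l × KV M l))

instance instMod (M : Type) [AddCommGroup M] [Module R M] : (l : List R) → Module R (KV M l)
  | [] => inferInstanceAs (Module R M)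
  | _ :: l => letI := instMod M l; inferInstanceAs (Module R (KV M l × KV M l))

/-- The Koszul differential, in mapping-cone form `(a, b) ↦ (d a + x b, -d b)`. It is a single
endomorphism of the total module; the homological degree is recorded by `Kos.g`. -/
def d : (l : List R) → KV M l →ₗ[R] KV M l
  | [] => 0
  | x :: l =>
    (LinearMap.prod ((d l).comp (LinearMap.fst R _ _) + x • LinearMap.snd R _ _)
      (-(d l).comp (LinearMap.snd R _ _)) : (KV M l × KV M l) →ₗ[R] (KV M l × KV M l))

theorem d_nil (z : KV M ([] : List R)) : d [] z = 0 := rfl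

theorem d_cons (x : R) (l : List R) (a b : KV M l) :
    d (x :: l) ((a, b) : KV M l × KV M l) = ((d l a + x • b, - d l b) : KV M l × KV M l) := rfl

theorem d_d (l : List R) (z : KV M l) : d l (d l z) = 0 := by
  induction l with
  | nil => rfl
  | cons x l ih =>
    obtain ⟨a, b⟩ := z
    rw [d_cons, d_cons]
    refine Prod.ext ?_ ?_
    · show d l (d l a + x • b) + x • (- d l b) = 0
      simp [ih]
    · show - d l (-(d l b)) = 0
      simp [ih]

/-- The part of `K(l; M)` of homological degree `i` and internal degree `e`, for a family `𝓜` of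
subgroups of `M` thought of as its graded pieces; every element of `l` counts as having degree 1. -/
def g (𝓜 : ℤ → AddSubgroup M) : (l : List R) → ℤ → ℤ → AddSubgroup (KV M l)
  | [], i, e => (if i = 0 then 𝓜 e else ⊥ : AddSubgroup M)
  | _ :: l, i, e => ((g 𝓜 l i e).prod (g 𝓜 l (i - 1) (e - 1)) : AddSubgroup (KV M l × KV M l))

theorem mem_g_nil (𝓜 : ℤ → AddSubgroup M) (i e : ℤ) (m : M) :
    (show KV M ([] : List R) from m) ∈ g 𝓜 ([] : List R) i e ↔ m ∈ (if i = 0 then 𝓜 e else ⊥) :=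
  Iff.rfl

theorem mem_g_cons (𝓜 : ℤ → AddSubgroup M) (x : R) (l : List R) (i e : ℤ) (a b : KV M l) :
    (show KV M (x :: l) from (a, b)) ∈ g 𝓜 (x :: l) i e ↔
      a ∈ g 𝓜 l i e ∧ b ∈ g 𝓜 l (i - 1) (e - 1) :=
  Iff.rfl

/-- Vanishing of the Koszul homology `H_i(l; M)_e`. -/
def HV (𝓜 : ℤ → AddSubgroup M) (l : List R) (i e : ℤ) : Prop :=
  ∀ z ∈ g 𝓜 l i e, d l z = 0 → ∃ w ∈ g 𝓜 l (i + 1) e, d l w = z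

theorem smul_mem (𝓜 : ℤ → AddSubgroup M) (y : R) (hy : ∀ e, ∀ m ∈ 𝓜 (e - 1), y • m ∈ 𝓜 e)
    (l : List R) : ∀ (i e : ℤ) (z : KV M l), z ∈ g 𝓜 l i (e - 1) → y • z ∈ g 𝓜 l i e := by
  induction l with
  | nil =>
    intro i e z hz
    by_cases hi : i = 0
    · subst hi; exact hy e z hz
    · have : z = 0 := by
        have := (mem_g_nil (R := R) 𝓜 i (e - 1) z).1 hz
        rw [if_neg hi] at this
        exact this
      rw [this, smul_zero]; exact zero_mem _
  | cons x l ih =>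
    rintro i e ⟨a, b⟩ hz
    exact ⟨ih i e a hz.1, ih (i - 1) (e - 1) b hz.2⟩

theorem d_mem (𝓜 : ℤ → AddSubgroup M) (l : List R)
    (hy : ∀ y ∈ l, ∀ e, ∀ m ∈ 𝓜 (e - 1), y • m ∈ 𝓜 e) :
    ∀ (i e : ℤ) (z : KV M l), z ∈ g 𝓜 l i e → d l z ∈ g 𝓜 l (i - 1) e := by
  induction l with
  | nil => intro i e z hz; rw [d_nil]; exact zero_mem _
  | cons x l ih =>
    have ih := ih (fun y h => hy y (List.mem_cons_of_mem _ h))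
    rintro i e ⟨a, b⟩ hz
    refine ⟨add_mem (ih i e a hz.1) (smul_mem 𝓜 x (hy x List.mem_cons_self) l _ _ b hz.2), ?_⟩
    exact (g 𝓜 l _ _).neg_mem (ih _ _ b hz.2)

/-- The map of Koszul complexes induced by an additive map. Linearity is asked for only over the
elements of `l`, and only where it is needed. -/
def kmap (φ : M →+ N) : (l : List R) → KV M l →+ KV N l
  | [] => φ
  | _ :: l => AddMonoidHom.prodMap (kmap φ l) (kmap φ l)

theorem kmap_cons (φ : M →+ N) (x : R) (l : List R) (a b : KV M l) :
    kmap φ (x :: l) ((a, b) : KV M l × KV M l) = ((kmap φ l a, kmap φ l b) : KV N l × KV N l) := rfl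

theorem kmap_smul (φ : M →+ N) (y : R) (h : ∀ m, φ (y • m) = y • φ m) (l : List R) (z : KV M l) :
    kmap φ l (y • z) = y • kmap φ l z := by
  induction l with
  | nil => exact h z
  | cons x l ih =>
    obtain ⟨a, b⟩ := z
    exact Prod.ext (ih a) (ih b)

theorem kmap_d (φ : M →+ N) (l : List R) (h : ∀ y ∈ l, ∀ m, φ (y • m) = y • φ m) (z : KV M l) :
    kmap φ l (d l z) = d l (kmap φ l z) := by
  induction l with
  | nil => rw [d_nil, d_nil, map_zero]
  | cons x l ih =>
    have ih := ih (fun y hy => h y (List.mem_cons_of_mem _ hy))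
    obtain ⟨a, b⟩ := z
    rw [kmap_cons, d_cons, d_cons, kmap_cons]
    refine Prod.ext ?_ ?_
    · show kmap φ l (d l a + x • b) = d l (kmap φ l a) + x • kmap φ l b
      rw [map_add, ih, kmap_smul φ x (h x List.mem_cons_self)]
    · show kmap φ l (- d l b) = - d l (kmap φ l b)
      rw [map_neg, ih]

theorem kmap_mem (𝓜 : ℤ → AddSubgroup M) (𝓝 : ℤ → AddSubgroup N) (φ : M →+ N) (c : ℤ)
    (h : ∀ e, ∀ m ∈ 𝓜 e, φ m ∈ 𝓝 (e - c)) (l : List R) :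
    ∀ (i e : ℤ) (z : KV M l), z ∈ g 𝓜 l i e → kmap φ l z ∈ g 𝓝 l i (e - c) := by
  induction l with
  | nil =>
    intro i e z hz
    by_cases hi : i = 0
    · subst hi; exact h e z hz
    · have : z = 0 := by
        have := (mem_g_nil (R := R) 𝓜 i e z).1 hz
        rw [if_neg hi] at this
        exact this
      rw [this, map_zero]; exact zero_mem _
  | cons x l ih =>
    rintro i e ⟨a, b⟩ hz
    refine ⟨ih i e a hz.1, ?_⟩
    have := ih (i - 1) (e - 1) b hz.2
    rw [show e - 1 - c = e - c - 1 by ring] at this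
    exact this

theorem kmap_mem0 (𝓜 : ℤ → AddSubgroup M) (𝓝 : ℤ → AddSubgroup N) (φ : M →+ N)
    (h : ∀ e, ∀ m ∈ 𝓜 e, φ m ∈ 𝓝 e) (l : List R) (i e : ℤ) (z : KV M l) (hz : z ∈ g 𝓜 l i e) :
    kmap φ l z ∈ g 𝓝 l i e := by
  have := kmap_mem 𝓜 𝓝 φ 0 (by simpa using h) l i e z hz
  simpa using this

theorem kmap_kmap_id (φ : M →+ N) (ψ : N →+ M) (h : ∀ m, ψ (φ m) = m) (l : List R) (z : KV M l) :
    kmap ψ l (kmap φ l z) = z := by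
  induction l with
  | nil => exact h z
  | cons x l ih => obtain ⟨a, b⟩ := z; exact Prod.ext (ih a) (ih b)

theorem kmap_kmap_zero (φ : M →+ N) (ψ : N →+ P) (h : ∀ m, ψ (φ m) = 0) (l : List R)
    (z : KV M l) : kmap ψ l (kmap φ l z) = 0 := by
  induction l with
  | nil => exact h z
  | cons x l ih => obtain ⟨a, b⟩ := z; exact Prod.ext (ih a) (ih b)

theorem kmap_inj (φ : M →+ N) (h : Function.Injective φ) (l : List R) :
    Function.Injective (kmap φ l) := by
  induction l with
  | nil => exact h
  | cons x l ih => exact Function.Injective.prodMap ih ih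

theorem kmap_scalar (x : R) (l : List R) (z : KV M l) :
    kmap (DistribSMul.toAddMonoidHom M x) l z = x • z := by
  induction l with
  | nil => rfl
  | cons y l ih => obtain ⟨a, b⟩ := z; exact Prod.ext (ih a) (ih b)

/-- A short exact sequence `0 → M → N → P → 0` of graded pieces, compatible with the action of the
elements of `l`, which raise the degree in `N` by one. -/
structure GSES (l : List R) (𝓜 : ℤ → AddSubgroup M) (𝓝 : ℤ → AddSubgroup N)
    (𝓟 : ℤ → AddSubgroup P) (φ : M →+ N) (ψ : N →+ P) : Prop where
  smulφ : ∀ y ∈ l, ∀ m, φ (y • m) = y • φ m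
  smulψ : ∀ y ∈ l, ∀ m, ψ (y • m) = y • ψ m
  inj : Function.Injective φ
  comp : ∀ m, ψ (φ m) = 0
  memψ : ∀ e, ∀ m ∈ 𝓝 e, ψ m ∈ 𝓟 e
  memφ : ∀ e, ∀ m ∈ 𝓜 e, φ m ∈ 𝓝 e
  exact : ∀ e, ∀ m ∈ 𝓝 e, ψ m = 0 → ∃ a ∈ 𝓜 e, φ a = m
  surj : ∀ e, ∀ m ∈ 𝓟 e, ∃ a ∈ 𝓝 e, ψ a = m
  ops : ∀ y ∈ l, ∀ e, ∀ m ∈ 𝓝 (e - 1), y • m ∈ 𝓝 e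

section SES

variable {l : List R} {𝓜 : ℤ → AddSubgroup M} {𝓝 : ℤ → AddSubgroup N}
    {𝓟 : ℤ → AddSubgroup P} {φ : M →+ N} {ψ : N →+ P}

theorem kmap_exact (𝓜 : ℤ → AddSubgroup M) (𝓝 : ℤ → AddSubgroup N)
    (φ : M →+ N) (ψ : N →+ P)
    (hex : ∀ e, ∀ m ∈ 𝓝 e, ψ m = 0 → ∃ a ∈ 𝓜 e, φ a = m) (l : List R) :
    ∀ (i e : ℤ) (z : KV N l), z ∈ g 𝓝 l i e → kmap ψ l z = 0 → ∃ a ∈ g 𝓜 l i e, kmap φ l a = z := by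
  induction l with
  | nil =>
    intro i e z hz h0
    by_cases hi : i = 0
    · subst hi; exact hex e z hz h0
    · have : z = 0 := by
        have := (mem_g_nil (R := R) 𝓝 i e z).1 hz
        rw [if_neg hi] at this
        exact this
      exact ⟨0, zero_mem _, by rw [this, map_zero]⟩
  | cons x l ih =>
    rintro i e ⟨a, b⟩ hz h0
    rw [kmap_cons] at h0
    obtain ⟨a', ha, ha'⟩ := ih _ _ a hz.1 (congrArg Prod.fst h0)
    obtain ⟨b', hb, hb'⟩ := ih _ _ b hz.2 (congrArg Prod.snd h0)
    exact ⟨(a', b'), ⟨ha, hb⟩, Prod.ext ha' hb'⟩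

theorem kmap_surj (𝓝 : ℤ → AddSubgroup N) (𝓟 : ℤ → AddSubgroup P)
    (ψ : N →+ P)
    (hex : ∀ e, ∀ m ∈ 𝓟 e, ∃ a ∈ 𝓝 e, ψ a = m) (l : List R) :
    ∀ (i e : ℤ) (z : KV P l), z ∈ g 𝓟 l i e → ∃ a ∈ g 𝓝 l i e, kmap ψ l a = z := by
  induction l with
  | nil =>
    intro i e z hz
    by_cases hi : i = 0
    · subst hi; exact hex e z hz
    · have : z = 0 := by
        have := (mem_g_nil (R := R) 𝓟 i e z).1 hz
        rw [if_neg hi] at this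
        exact this
      exact ⟨0, zero_mem _, by rw [this, map_zero]⟩
  | cons x l ih =>
    rintro i e ⟨a, b⟩ hz
    obtain ⟨a', ha, ha'⟩ := ih _ _ a hz.1
    obtain ⟨b', hb, hb'⟩ := ih _ _ b hz.2
    exact ⟨(a', b'), And.intro ha hb, Prod.ext ha' hb' |>.trans rfl⟩

/-- The long exact sequence at `H_{i+1}(P) → H_i(M) → H_i(N)`. -/
theorem GSES.hv_left (S : GSES l 𝓜 𝓝 𝓟 φ ψ) {i e : ℤ} (hP : HV 𝓟 l (i + 1) e)
    (hN : HV 𝓝 l i e) : HV 𝓜 l i e := by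
  intro a ha hda
  obtain ⟨b, hb, hdb⟩ := hN (kmap φ l a) (kmap_mem0 _ _ φ S.memφ l _ _ _ ha)
    (by rw [← kmap_d φ l S.smulφ, hda, map_zero])
  obtain ⟨c, hc, hdc⟩ := hP (kmap ψ l b) (kmap_mem0 _ _ ψ S.memψ l _ _ _ hb)
    (by rw [← kmap_d ψ l S.smulψ, hdb, kmap_kmap_zero φ ψ S.comp])
  obtain ⟨b', hb', rfl⟩ := kmap_surj 𝓝 𝓟 ψ S.surj l _ _ c hc
  have h1 := d_mem 𝓝 l S.ops _ _ _ hb'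
  rw [show i + 1 + 1 - 1 = i + 1 by ring] at h1
  obtain ⟨a', ha', h2⟩ := kmap_exact 𝓜 𝓝 φ ψ S.exact l _ _ (b - d l b') (sub_mem hb h1)
    (by rw [map_sub, kmap_d ψ l S.smulψ, hdc, sub_self])
  refine ⟨a', ha', kmap_inj φ S.inj l ?_⟩
  rw [kmap_d φ l S.smulφ, h2, map_sub, d_d, sub_zero, hdb]

/-- The long exact sequence at `H_i(N) → H_i(P) → H_{i-1}(M)`. -/
theorem GSES.hv_right (S : GSES l 𝓜 𝓝 𝓟 φ ψ) {i j e : ℤ} (hij : j + 1 = i) (hM : HV 𝓜 l j e)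
    (hN : HV 𝓝 l i e) : HV 𝓟 l i e := by
  subst hij
  intro c hc hdc
  obtain ⟨b, hb, rfl⟩ := kmap_surj 𝓝 𝓟 ψ S.surj l _ _ c hc
  have h1 := d_mem 𝓝 l S.ops _ _ _ hb
  rw [show j + 1 - 1 = j by ring] at h1
  obtain ⟨a, ha, h2⟩ := kmap_exact 𝓜 𝓝 φ ψ S.exact l _ _ (d l b) h1
    (by rw [kmap_d ψ l S.smulψ, hdc])
  obtain ⟨a', ha', h3⟩ := hM a ha (kmap_inj φ S.inj l (by
    rw [kmap_d φ l S.smulφ, h2, d_d, map_zero]))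
  obtain ⟨w, hw, h4⟩ := hN (b - kmap φ l a') (sub_mem hb (kmap_mem0 _ _ φ S.memφ l _ _ _ ha'))
    (by rw [map_sub, ← kmap_d φ l S.smulφ, h3, h2, sub_self])
  refine ⟨kmap ψ l w, kmap_mem0 _ _ ψ S.memψ l _ _ _ hw, ?_⟩
  rw [← kmap_d ψ l S.smulψ, h4, map_sub, kmap_kmap_zero φ ψ S.comp, sub_zero]

end SES

theorem eq_zero_of_neg (𝓜 : ℤ → AddSubgroup M) (l : List R) :
    ∀ (i e : ℤ) (z : KV M l), i < 0 → z ∈ g 𝓜 l i e → z = 0 := by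
  induction l with
  | nil =>
    intro i e z hi hz
    have := (mem_g_nil (R := R) 𝓜 i e z).1 hz
    rw [if_neg hi.ne] at this
    exact this
  | cons x l ih =>
    rintro i e ⟨a, b⟩ hi hz
    exact Prod.ext (ih _ _ a hi hz.1) (ih _ _ b (by lia) hz.2)

theorem eq_zero_of_gt (𝓜 : ℤ → AddSubgroup M) (l : List R) :
    ∀ (i e : ℤ) (z : KV M l), (l.length : ℤ) < i → z ∈ g 𝓜 l i e → z = 0 := by
  induction l with
  | nil =>
    intro i e z hi hz
    have := (mem_g_nil (R := R) 𝓜 i e z).1 hz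
    rw [if_neg (by simpa using hi.ne')] at this
    exact this
  | cons x l ih =>
    rintro i e ⟨a, b⟩ hi hz
    rw [List.length_cons] at hi
    exact Prod.ext (ih _ _ a (by lia) hz.1) (ih _ _ b (by lia) hz.2)

theorem hv_of_neg (𝓜 : ℤ → AddSubgroup M) (l : List R) {i e : ℤ} (hi : i < 0) : HV 𝓜 l i e :=
  fun z hz _ => ⟨0, zero_mem _, by rw [map_zero, eq_zero_of_neg 𝓜 l i e z hi hz]⟩

theorem hv_of_gt (𝓜 : ℤ → AddSubgroup M) (l : List R) {i e : ℤ} (hi : (l.length : ℤ) < i) :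
    HV 𝓜 l i e :=
  fun z hz _ => ⟨0, zero_mem _, by rw [map_zero, eq_zero_of_gt 𝓜 l i e z hi hz]⟩

/-- The Koszul homology vanishes in positive homological degree when each `x ∈ l` acts with an additive
left inverse `δ` of degree `-1` commuting with the other elements of `l`. This is the case for
polynomials, where `δ` is division by a variable that drops the terms not divisible by it. -/
theorem hv_of_div (𝓜 : ℤ → AddSubgroup M) (l : List R) (hl : l.Nodup)
    (ops : ∀ y ∈ l, ∀ e, ∀ m ∈ 𝓜 (e - 1), y • m ∈ 𝓜 e)
    (h : ∀ x ∈ l, ∃ δ : M →+ M, (∀ m, δ (x • m) = m) ∧ (∀ e, ∀ m ∈ 𝓜 e, δ m ∈ 𝓜 (e - 1)) ∧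
      ∀ y ∈ l, y ≠ x → ∀ m, δ (y • m) = y • δ m) :
    ∀ i e : ℤ, 0 < i → HV 𝓜 l i e := by
  induction l with
  | nil => intro i e hi; exact hv_of_gt 𝓜 _ (by simpa using hi)
  | cons x l ih =>
    rintro i e hi ⟨a, b⟩ hz hd
    rw [List.nodup_cons] at hl
    have ops' := fun y hy => ops y (List.mem_cons_of_mem x hy)
    have ih := ih hl.2 ops' (fun y hy => by
      obtain ⟨δ, h1, h2, h3⟩ := h y (List.mem_cons_of_mem x hy)
      exact ⟨δ, h1, h2, fun z hz => h3 z (List.mem_cons_of_mem x hz)⟩)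
    obtain ⟨δ, h1, h2, h3⟩ := h x List.mem_cons_self
    have hδd : ∀ z : KV M l, kmap δ l (d l z) = d l (kmap δ l z) := fun z =>
      kmap_d δ l (fun y hy m => h3 y (List.mem_cons_of_mem x hy) (by rintro rfl; exact hl.1 hy) m) z
    have hδx : ∀ z : KV M l, kmap δ l (x • z) = z := by
      intro z
      have := kmap_kmap_id (DistribSMul.toAddMonoidHom M x) δ h1 l z
      rwa [kmap_scalar] at this
    rw [d_cons] at hd
    have e1 : d l a + x • b = 0 := congrArg Prod.fst hd
    have e2 : b = - d l (kmap δ l a) := by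
      rw [← hδd, ← hδx b, eq_neg_of_add_eq_zero_right e1, map_neg]
    have hδa : kmap δ l a ∈ g 𝓜 l i (e - 1) := kmap_mem 𝓜 𝓜 δ 1 h2 l _ _ a hz.1
    have hx := smul_mem 𝓜 x (ops x List.mem_cons_self) l _ _ _ hδa
    obtain ⟨w, hw, hdw⟩ := ih i e hi (a - x • kmap δ l a) (sub_mem hz.1 hx) (by
      rw [map_sub, map_smul, eq_neg_of_add_eq_zero_left e1, e2]; simp)
    refine ⟨(w, kmap δ l a), ⟨hw, by simpa using hδa⟩, ?_⟩
    rw [d_cons]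
    refine Prod.ext ?_ ?_
    · show d l w + x • kmap δ l a = a
      rw [hdw, sub_add_cancel]
    · exact e2.symm

/-- The recursive form of `m ∈ ∑_{x ∈ l} x • 𝓜 (e - 1)`. -/
def Dec (𝓜 : ℤ → AddSubgroup M) (e : ℤ) : List R → M → Prop
  | [], m => m = 0
  | x :: l, m => ∃ m₁ ∈ 𝓜 (e - 1), Dec 𝓜 e l (m - x • m₁)

/-- The inclusion of `M` as the part of homological degree 0. -/
def ι : (l : List R) → M →+ KV M l
  | [] => AddMonoidHom.id M
  | _ :: l => (AddMonoidHom.inl (KV M l) (KV M l)).comp (ι l)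

theorem ι_inj (l : List R) : Function.Injective (ι l : M →+ KV M l) := by
  induction l with
  | nil => exact fun _ _ h => h
  | cons x l ih => exact fun a b h => ih (congrArg Prod.fst h)

theorem ι_smul (l : List R) (y : R) (m : M) : ι l (y • m) = y • (ι l m : KV M l) := by
  induction l with
  | nil => rfl
  | cons x l ih => exact Prod.ext ih (smul_zero y).symm

theorem mem_g_zero (𝓜 : ℤ → AddSubgroup M) (l : List R) :
    ∀ (e : ℤ) (z : KV M l), z ∈ g 𝓜 l 0 e ↔ ∃ m ∈ 𝓜 e, ι l m = z := by
  induction l with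
  | nil => exact fun e z => ⟨fun h => ⟨z, h, rfl⟩, fun ⟨m, h, e⟩ => e ▸ h⟩
  | cons x l ih =>
    rintro e ⟨a, b⟩
    constructor
    · intro hz
      obtain ⟨m, hm, rfl⟩ := (ih e a).1 hz.1
      exact ⟨m, hm, Prod.ext rfl (eq_zero_of_neg 𝓜 l _ _ b (by norm_num) hz.2).symm⟩
    · rintro ⟨m, hm, h⟩
      exact ⟨(ih e a).2 ⟨m, hm, congrArg Prod.fst h⟩,
        (congrArg Prod.snd h : 0 = b) ▸ zero_mem _⟩

theorem d_ι (l : List R) (m : M) : d l (ι l m) = 0 := by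
  induction l with
  | nil => rfl
  | cons x l ih =>
    show d (x :: l) ((ι l m, 0) : KV M l × KV M l) = 0
    rw [d_cons, ih, map_zero, smul_zero, add_zero, neg_zero]; rfl

theorem boundary_iff (𝓜 : ℤ → AddSubgroup M) (l : List R) :
    ∀ (e : ℤ) (m : M), (∃ w ∈ g 𝓜 l 1 e, d l w = ι l m) ↔ Dec 𝓜 e l m := by
  induction l with
  | nil =>
    intro e m
    exact ⟨fun ⟨w, _, h⟩ => h.symm, fun h => ⟨0, zero_mem _, by rw [show m = 0 from h]; rfl⟩⟩
  | cons x l ih =>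
    intro e m
    constructor
    · rintro ⟨⟨w1, w2⟩, hw, h⟩
      obtain ⟨m', hm', rfl⟩ := (mem_g_zero 𝓜 l _ w2).1 hw.2
      refine ⟨m', hm', (ih e _).1 ⟨w1, hw.1, ?_⟩⟩
      have : d l w1 + x • ι l m' = ι l m := congrArg Prod.fst h
      rw [map_sub, ι_smul, ← this, add_sub_cancel_right]
    · rintro ⟨m', hm', h⟩
      obtain ⟨w1, hw1, h1⟩ := (ih e _).2 h
      refine ⟨(w1, ι l m'), ⟨hw1, (mem_g_zero 𝓜 l _ _).2 ⟨m', hm', rfl⟩⟩, ?_⟩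
      rw [d_cons, h1, d_ι, ← ι_smul, ← map_add, sub_add_cancel, neg_zero]; rfl

theorem hv_zero_iff (𝓜 : ℤ → AddSubgroup M) (l : List R) (e : ℤ) :
    HV 𝓜 l 0 e ↔ ∀ m ∈ 𝓜 e, Dec 𝓜 e l m := by
  constructor
  · intro h m hm
    exact (boundary_iff 𝓜 l e m).1 (h _ ((mem_g_zero 𝓜 l e _).2 ⟨m, hm, rfl⟩) (d_ι l m))
  · intro h z hz _
    obtain ⟨m, hm, rfl⟩ := (mem_g_zero 𝓜 l e z).1 hz
    exact (boundary_iff 𝓜 l e m).2 (h m hm)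

/-- The inclusion of `M` as the part of top homological degree `|l|`. -/
def τ : (l : List R) → M →+ KV M l
  | [] => AddMonoidHom.id M
  | _ :: l => (AddMonoidHom.inr (KV M l) (KV M l)).comp (τ l)

theorem τ_inj (l : List R) : Function.Injective (τ l : M →+ KV M l) := by
  induction l with
  | nil => exact fun _ _ h => h
  | cons x l ih => exact fun a b h => ih (congrArg Prod.snd h)

theorem τ_smul (l : List R) (y : R) (m : M) : τ l (y • m) = y • (τ l m : KV M l) := by
  induction l with
  | nil => rfl
  | cons x l ih => exact Prod.ext (smul_zero y).symm ih

theorem kmap_τ (φ : M →+ N) (l : List R) (m : M) : kmap φ l (τ l m) = τ l (φ m) := by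
  induction l with
  | nil => rfl
  | cons x l ih => exact Prod.ext (map_zero (kmap φ l)) ih

theorem d_τ (l : List R) (m : M) : d l (τ l m) = 0 ↔ ∀ x ∈ l, x • m = 0 := by
  induction l with
  | nil => simp [d_nil]
  | cons x l ih =>
    have : d (x :: l) (τ (x :: l) m) = ((x • τ l m, - d l (τ l m)) : KV M l × KV M l) := by
      show d (x :: l) ((0, τ l m) : KV M l × KV M l) = _
      rw [d_cons, map_zero, zero_add]
    rw [this, List.forall_mem_cons, ← ih]
    constructor
    · intro h
      have h1 : x • τ l m = 0 := congrArg Prod.fst h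
      have h2 : - d l (τ l m) = 0 := congrArg Prod.snd h
      exact ⟨τ_inj l (by rw [τ_smul, h1, map_zero]), neg_eq_zero.1 h2⟩
    · rintro ⟨h1, h2⟩
      exact Prod.ext (by rw [← τ_smul, h1, map_zero]; rfl) (neg_eq_zero.2 h2)

/-- The constant family `⊤`, which forgets the internal grading. -/
def triv (M : Type) [AddCommGroup M] : ℤ → AddSubgroup M := fun _ => ⊤

theorem mem_g_top (l : List R) :
    ∀ (e : ℤ) (z : KV M l), z ∈ g (triv M) l l.length e ↔ ∃ m, τ l m = z := by
  induction l with
  | nil => exact fun e z => ⟨fun h => ⟨z, rfl⟩, fun _ => by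
      show z ∈ (if ((([] : List R).length : ℤ)) = 0 then triv M e else ⊥ : AddSubgroup M)
      simp [triv]
      exact AddSubgroup.mem_top z⟩
  | cons x l ih =>
    rintro e ⟨a, b⟩
    constructor
    · intro hz
      have h2 : b ∈ g (triv M) l ((x :: l).length - 1 : ℤ) (e - 1) := hz.2
      rw [List.length_cons, Nat.cast_add, Nat.cast_one, add_sub_cancel_right] at h2
      obtain ⟨m, hm⟩ := (ih _ b).1 h2
      exact ⟨m, Prod.ext (eq_zero_of_gt _ l _ _ a (by simp) hz.1).symm hm⟩
    · rintro ⟨m, h⟩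
      refine ⟨(congrArg Prod.fst h : 0 = a) ▸ zero_mem _, ?_⟩
      show b ∈ g (triv M) l ((x :: l).length - 1 : ℤ) (e - 1)
      rw [List.length_cons, Nat.cast_add, Nat.cast_one, add_sub_cancel_right]
      exact (ih _ b).2 ⟨m, congrArg Prod.snd h⟩

/-- The top Koszul homology is the socle `(0 :_M l)`. -/
theorem hv_top_iff (l : List R) (e : ℤ) :
    HV (triv M) l l.length e ↔ ∀ m : M, (∀ x ∈ l, x • m = 0) → m = 0 := by
  constructor
  · intro h m hm
    obtain ⟨w, hw, hd⟩ := h (τ l m) ((mem_g_top l e _).2 ⟨m, rfl⟩) ((d_τ l m).2 hm)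
    rw [eq_zero_of_gt _ l _ _ w (by simp) hw, map_zero] at hd
    exact τ_inj l (by rw [← hd, map_zero])
  · intro h z hz hd
    obtain ⟨m, rfl⟩ := (mem_g_top l e z).1 hz
    exact ⟨0, zero_mem _, by rw [h m ((d_τ l m).1 hd), map_zero, map_zero]⟩

/-- If `N` is killed by `x` and is a quotient of `M` with a section linear over the elements of `l`, then
vanishing of `H_i(x :: l; M)` gives vanishing of `H_i(l; N)`. -/
theorem hv_section (𝓜 : ℤ → AddSubgroup M) (𝓝 : ℤ → AddSubgroup N) (x : R) (l : List R)
    (p : M →+ N) (s : N →+ M) (hp : ∀ y ∈ x :: l, ∀ m, p (y • m) = y • p m)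
    (hs : ∀ y ∈ l, ∀ m, s (y • m) = y • s m) (hps : ∀ m, p (s m) = m) (hx : ∀ m : N, x • m = 0)
    (hpg : ∀ e, ∀ m ∈ 𝓜 e, p m ∈ 𝓝 e) (hsg : ∀ e, ∀ m ∈ 𝓝 e, s m ∈ 𝓜 e) {i e : ℤ}
    (h : HV 𝓜 (x :: l) i e) : HV 𝓝 l i e := by
  intro z hz hd
  have hp' := fun y hy => hp y (List.mem_cons_of_mem x hy)
  obtain ⟨⟨a, b⟩, hw, hdw⟩ := h ((kmap s l z, 0) : KV M l × KV M l)
    ⟨kmap_mem0 _ _ s hsg l _ _ _ hz, zero_mem _⟩ (by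
      rw [d_cons, ← kmap_d s l hs, hd, map_zero, map_zero, smul_zero, add_zero, neg_zero]; rfl)
  refine ⟨kmap p l a, kmap_mem0 _ _ p hpg l _ _ _ hw.1, ?_⟩
  have h1 : d l a + x • b = kmap s l z := congrArg Prod.fst hdw
  have h2 : x • kmap p l b = 0 := by
    rw [← kmap_scalar]
    generalize kmap p l b = c
    clear * - hx
    induction l with
    | nil => exact hx c
    | cons y l ih => obtain ⟨a, b⟩ := c; exact Prod.ext (ih a) (ih b)
  rw [← kmap_d p l hp', eq_sub_of_add_eq h1, map_sub, kmap_kmap_id s p hps,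
    kmap_smul p x (hp x List.mem_cons_self), h2, sub_zero]

/-- If `x` kills `N`, then `H_i(x :: l; N)_e` splits as `H_i(l; N)_e ⊕ H_{i-1}(l; N)_{e-1}`. -/
theorem hv_cons_of_smul_zero (𝓝 : ℤ → AddSubgroup N) (x : R) (l : List R) (hx : ∀ m : N, x • m = 0)
    {i e : ℤ} (h : HV 𝓝 l i e) (h' : HV 𝓝 l (i - 1) (e - 1)) : HV 𝓝 (x :: l) i e := by
  have hx' : ∀ c : KV N l, x • c = 0 := by
    clear * - hx
    intro c
    induction l with
    | nil => exact hx c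
    | cons y l ih => obtain ⟨a, b⟩ := c; exact Prod.ext (ih a) (ih b)
  rintro ⟨z, w⟩ hz hd
  rw [d_cons, hx', add_zero] at hd
  obtain ⟨a, ha, hda⟩ := h z hz.1 (congrArg Prod.fst hd)
  obtain ⟨b, hb, hdb⟩ := h' w hz.2 (neg_eq_zero.1 (congrArg Prod.snd hd))
  rw [show i - 1 + 1 = i + 1 - 1 by ring] at hb
  refine ⟨((a, -b) : KV N l × KV N l), ⟨ha, (g 𝓝 l _ _).neg_mem hb⟩, ?_⟩
  rw [d_cons, hx', add_zero, map_neg, neg_neg, hda, hdb]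

theorem g_shift (𝓜 : ℤ → AddSubgroup M) (c : ℤ) (l : List R) :
    ∀ i e : ℤ, g (fun e => 𝓜 (e - c)) l i e = g 𝓜 l i (e - c) := by
  induction l with
  | nil => intro i e; rfl
  | cons x l ih =>
    intro i e
    show AddSubgroup.prod _ _ = AddSubgroup.prod _ _
    rw [ih, ih, show e - 1 - c = e - c - 1 by ring]

theorem hv_shift (𝓜 : ℤ → AddSubgroup M) (c : ℤ) (l : List R) (i e : ℤ) :
    HV (fun e => 𝓜 (e - c)) l i e ↔ HV 𝓜 l i (e - c) := by
  unfold HV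
  rw [g_shift, g_shift]

end Kos

/-! ### Koszul homology of colons of monomial ideals -/

noncomputable section

namespace Colon

open Kos

variable {K : Type} [Field K] {n : ℕ}

/-- The sequence of variables listed by `L`. -/
abbrev Xs (K : Type) [Field K] {n : ℕ} (L : List (Fin n)) : List (MvPoly K (Fin n)) := L.map X

/-- Division by `X v`, dropping the terms not divisible by `X v`. -/
def δ (v : Fin n) : MvPoly K (Fin n) →+ MvPoly K (Fin n) where
  toFun p := p.divMonomial (Finsupp.single v 1)
  map_zero' := zero_divMonomial _
  map_add' p q := add_divMonomial p q _

theorem coeff_δ (v : Fin n) (p : MvPoly K (Fin n)) (a : Fin n →₀ ℕ) :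
    coeff a (δ v p) = coeff (Finsupp.single v 1 + a) p := coeff_divMonomial _ _ _

theorem δ_X (v : Fin n) (p : MvPoly K (Fin n)) : δ v (X v * p) = p := X_mul_divMonomial v p

theorem δ_X_ne {v w : Fin n} (h : w ≠ v) (p : MvPoly K (Fin n)) :
    δ v (X w * p) = X w * δ v p := by
  ext a
  rw [coeff_δ, coeff_X_mul', coeff_X_mul']
  have : w ∈ (Finsupp.single v 1 + a).support ↔ w ∈ a.support := by
    simp [h.symm]
  by_cases hw : w ∈ a.support
  · rw [if_pos hw, if_pos (this.2 hw), coeff_δ, add_tsub_assoc_of_le]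
    simpa [Finsupp.single_le_iff, Nat.one_le_iff_ne_zero] using hw
  · rw [if_neg hw, if_neg (mt this.1 hw)]

/-- The sum of the terms in which `X v` does not occur. -/
def θ (v : Fin n) : MvPoly K (Fin n) →+ MvPoly K (Fin n) where
  toFun p := p - X v * δ v p
  map_zero' := by simp
  map_add' p q := by simp only [map_add]; ring

theorem θ_def (v : Fin n) (p : MvPoly K (Fin n)) : θ v p = p - X v * δ v p := rfl

theorem θ_X (v : Fin n) (p : MvPoly K (Fin n)) : θ v (X v * p) = 0 := by
  rw [θ_def, δ_X, sub_self]

theorem θ_X_ne {v w : Fin n} (h : w ≠ v) (p : MvPoly K (Fin n)) :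
    θ v (X w * p) = X w * θ v p := by
  rw [θ_def, θ_def, δ_X_ne h]; ring

theorem coeff_θ (v : Fin n) (p : MvPoly K (Fin n)) (a : Fin n →₀ ℕ) :
    coeff a (θ v p) = if a v = 0 then coeff a p else 0 := by
  rw [θ_def, coeff_sub, coeff_X_mul', coeff_δ]
  by_cases h : a v = 0
  · simp [h]
  · have h1 : v ∈ a.support := by simpa using h
    rw [if_pos h1, if_neg h, add_tsub_cancel_of_le, sub_self]
    simpa [Finsupp.single_le_iff, Nat.one_le_iff_ne_zero] using h

/-- Monomial ideals: the ideal contains every monomial occurring in one of its elements. -/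
def Mon (I : Ideal (MvPoly K (Fin n))) : Prop :=
  ∀ p ∈ I, ∀ a, coeff a p ≠ 0 → monomial a (1 : K) ∈ I

theorem Mon.of_forall {I : Ideal (MvPoly K (Fin n))} (p : MvPoly K (Fin n))
    (h : ∀ a, coeff a p ≠ 0 → monomial a (1 : K) ∈ I) : p ∈ I := by
  rw [p.as_sum]
  refine Ideal.sum_mem _ fun a ha => ?_
  have := I.mul_mem_left (C (coeff a p)) (h a (by simpa using ha))
  rwa [C_mul_monomial, mul_one] at this

theorem Mon.θ_mem {I : Ideal (MvPoly K (Fin n))} (hI : Mon I) (v : Fin n) {p : MvPoly K (Fin n)}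
    (hp : p ∈ I) : θ v p ∈ I := by
  refine Mon.of_forall _ fun a ha => hI p hp a ?_
  rw [coeff_θ] at ha
  aesop

theorem Mon.colon {I J : Ideal (MvPoly K (Fin n))} (hI : Mon I) (v : Fin n)
    (hJ : ∀ p, p ∈ J ↔ X v * p ∈ I) : Mon J := by
  intro p hp a ha
  rw [hJ] at hp ⊢
  have := hI _ hp (Finsupp.single v 1 + a) (by rwa [coeff_X_mul])
  rwa [X, monomial_mul, mul_one]

/-- The image of `𝓗 e` in `R/I`; `𝓗` is either the standard grading or the constant family `⊤`. -/
def 𝓠 (𝓗 : ℤ → AddSubgroup (MvPoly K (Fin n))) (I : Ideal (MvPoly K (Fin n))) (e : ℤ) :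
    AddSubgroup (MvPoly K (Fin n) ⧸ I) :=
  (𝓗 e).map (Ideal.Quotient.mk I : MvPoly K (Fin n) →+ MvPoly K (Fin n) ⧸ I)

theorem mem_𝓠 (𝓗 : ℤ → AddSubgroup (MvPoly K (Fin n))) (I : Ideal (MvPoly K (Fin n))) (e : ℤ)
    (m : MvPoly K (Fin n) ⧸ I) : m ∈ 𝓠 𝓗 I e ↔ ∃ p ∈ 𝓗 e, Ideal.Quotient.mk I p = m := Iff.rfl

theorem mk_smul (I : Ideal (MvPoly K (Fin n))) (r p : MvPoly K (Fin n)) :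
    r • Ideal.Quotient.mk I p = Ideal.Quotient.mk I (r * p) := rfl

section Step

variable {𝓗 : ℤ → AddSubgroup (MvPoly K (Fin n))}
  {I I₀ J : Ideal (MvPoly K (Fin n))} {v : Fin n}

theorem exists_lift (f : MvPoly K (Fin n) →+ MvPoly K (Fin n)) (hf : ∀ p ∈ I₀, f p ∈ I) :
    ∃ s : (MvPoly K (Fin n) ⧸ I₀) →+ (MvPoly K (Fin n) ⧸ I),
      ∀ p, s (Ideal.Quotient.mk I₀ p) = Ideal.Quotient.mk I (f p) := by
  have key : ∀ p q, Ideal.Quotient.mk I₀ p = Ideal.Quotient.mk I₀ q →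
      Ideal.Quotient.mk I (f p) = Ideal.Quotient.mk I (f q) := by
    intro p q h
    rw [Ideal.Quotient.eq] at h ⊢
    rw [← map_sub]
    exact hf _ h
  choose r hr using Ideal.Quotient.mk_surjective (I := I₀)
  refine ⟨AddMonoidHom.mk' (fun m => Ideal.Quotient.mk I (f (r m))) fun a b => ?_, fun p => ?_⟩
  · rw [← map_add, ← map_add]
    exact key _ _ (by rw [map_add, hr, hr, hr])
  · exact key _ _ (hr _)

/-- Koszul homology and colon ideals. For a monomial ideal `I` and `J = (I : x_v)`, there is an exact
sequence `0 → R/J(-1) → R/I → R/(I, x_v) → 0`, and `R/(I, x_v)` is a retract of `R/I` over the variables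
other than `x_v`, because the terms without `x_v` of an element of `I` again form an element of `I`. So
vanishing of three groups for `R/I` gives vanishing of `H_j(R/J)_e`. -/
theorem hv_colon (hX : ∀ w e, ∀ p ∈ 𝓗 (e - 1), X w * p ∈ 𝓗 e)
    (hδ : ∀ w e, ∀ p ∈ 𝓗 e, δ w p ∈ 𝓗 (e - 1)) (hI : Mon I)
    (hJ : ∀ p, p ∈ J ↔ X v * p ∈ I) (L : List (Fin n)) (hL : v ∉ L) (j e : ℤ)
    (h1 : HV (𝓠 𝓗 I) (Xs K (v :: L)) (j + 1) (e + 1)) (h2 : HV (𝓠 𝓗 I) (Xs K (v :: L)) j e)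
    (h3 : HV (𝓠 𝓗 I) (Xs K (v :: L)) j (e + 1)) :
    HV (𝓠 𝓗 J) (Xs K (v :: L)) j e := by
  have hθ : ∀ e, ∀ p ∈ 𝓗 e, θ v p ∈ 𝓗 e := fun e p hp => sub_mem hp (hX v e _ (hδ v e p hp))
  -- `I₀ = (I, x_v)`
  obtain ⟨I₀, h₀⟩ : ∃ I₀ : Ideal (MvPoly K (Fin n)), ∀ p, p ∈ I₀ ↔ θ v p ∈ I := by
    refine ⟨I ⊔ Ideal.span {X v}, fun p => ⟨fun h => ?_, fun h => ?_⟩⟩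
    · obtain ⟨a, ha, b, hb, rfl⟩ := Submodule.mem_sup.1 h
      obtain ⟨c, rfl⟩ := Ideal.mem_span_singleton'.1 hb
      rw [map_add, mul_comm c, θ_X, add_zero]
      exact hI.θ_mem v ha
    · have : p = θ v p + X v * δ v p := by rw [θ_def]; ring
      rw [this]
      exact add_mem (Ideal.mem_sup_left h)
        (Ideal.mem_sup_right (Ideal.mul_mem_right _ _ (Ideal.mem_span_singleton_self _)))
  have hle : I ≤ I₀ := fun p hp => (h₀ p).2 (hI.θ_mem v hp)
  obtain ⟨s, hs⟩ := exists_lift (θ v) (fun p hp => (h₀ p).1 hp)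
  have hx : ∀ m : MvPoly K (Fin n) ⧸ I₀, (X v : MvPoly K (Fin n)) • m = 0 := by
    intro m
    obtain ⟨p, rfl⟩ := Ideal.Quotient.mk_surjective m
    rw [mk_smul, Ideal.Quotient.eq_zero_iff_mem, h₀, θ_X]
    exact zero_mem _
  have hθθ : ∀ p : MvPoly K (Fin n), θ v (θ v p) = θ v p := by
    intro p
    conv_lhs => rw [θ_def v p, map_sub, θ_X, sub_zero]
  let p : (MvPoly K (Fin n) ⧸ I) →ₗ[MvPoly K (Fin n)] (MvPoly K (Fin n) ⧸ I₀) :=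
    Submodule.mapQ I I₀ LinearMap.id hle
  have hpg : ∀ e, ∀ m ∈ 𝓠 𝓗 I e, p m ∈ 𝓠 𝓗 I₀ e := by
    rintro e _ ⟨q, hq, rfl⟩
    exact ⟨q, hq, rfl⟩
  have hT : ∀ i e, HV (𝓠 𝓗 I) (Xs K (v :: L)) i e → HV (𝓠 𝓗 I₀) (Xs K L) i e := by
    intro i e h
    refine hv_section (𝓠 𝓗 I) (𝓠 𝓗 I₀) (X v) (Xs K L) p.toAddMonoidHom s
      (fun y _ m => map_smul p y m) ?_ ?_ hx hpg ?_ h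
    · intro y hy m
      obtain ⟨w, hw, rfl⟩ := List.mem_map.1 hy
      obtain ⟨q, rfl⟩ := Ideal.Quotient.mk_surjective m
      rw [mk_smul, hs, hs, mk_smul, θ_X_ne (by rintro rfl; exact hL hw)]
    · intro m
      obtain ⟨q, rfl⟩ := Ideal.Quotient.mk_surjective m
      rw [hs]
      show Ideal.Quotient.mk I₀ (θ v q) = Ideal.Quotient.mk I₀ q
      rw [Ideal.Quotient.eq, h₀, map_sub, hθθ, sub_self]
      exact zero_mem _
    · rintro e _ ⟨q, hq, rfl⟩
      exact ⟨θ v q, hθ e q hq, (hs q).symm⟩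
  have h0 : HV (𝓠 𝓗 I₀) (Xs K (v :: L)) (j + 1) (e + 1) := by
    refine hv_cons_of_smul_zero _ _ _ hx (hT _ _ h1) ?_
    rw [add_sub_cancel_right, add_sub_cancel_right]
    exact hT _ _ h2
  let φ : (MvPoly K (Fin n) ⧸ J) →ₗ[MvPoly K (Fin n)] (MvPoly K (Fin n) ⧸ I) :=
    Submodule.mapQ J I (LinearMap.mulLeft (MvPoly K (Fin n)) (X v)) (fun q hq => (hJ q).1 hq)
  have S : GSES (Xs K (v :: L)) (fun e => 𝓠 𝓗 J (e - 1)) (𝓠 𝓗 I) (𝓠 𝓗 I₀) φ.toAddMonoidHom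
      p.toAddMonoidHom := by
    refine ⟨fun y _ m => map_smul φ y m, fun y _ m => map_smul p y m, ?_, ?_, hpg, ?_, ?_, ?_, ?_⟩
    · refine (injective_iff_map_eq_zero φ.toAddMonoidHom).2 fun m hm => ?_
      obtain ⟨q, rfl⟩ := Ideal.Quotient.mk_surjective m
      replace hm : Ideal.Quotient.mk I (X v * q) = 0 := hm
      rw [Ideal.Quotient.eq_zero_iff_mem] at hm ⊢
      exact (hJ q).2 hm
    · intro m
      obtain ⟨q, rfl⟩ := Ideal.Quotient.mk_surjective m
      show Ideal.Quotient.mk I₀ (X v * q) = 0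
      rw [Ideal.Quotient.eq_zero_iff_mem, h₀, θ_X]
      exact zero_mem _
    · rintro e _ ⟨q, hq, rfl⟩
      exact ⟨X v * q, hX v e q hq, rfl⟩
    · rintro e _ ⟨q, hq, rfl⟩ h
      replace h : Ideal.Quotient.mk I₀ q = 0 := h
      rw [Ideal.Quotient.eq_zero_iff_mem, h₀] at h
      refine ⟨Ideal.Quotient.mk J (δ v q), ⟨δ v q, hδ v e q hq, rfl⟩, ?_⟩
      show Ideal.Quotient.mk I (X v * δ v q) = Ideal.Quotient.mk I q
      rw [eq_comm, Ideal.Quotient.eq]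
      exact h
    · rintro e _ ⟨q, hq, rfl⟩
      exact ⟨_, ⟨q, hq, rfl⟩, rfl⟩
    · rintro y hy e _ ⟨q, hq, rfl⟩
      obtain ⟨w, hw, rfl⟩ := List.mem_map.1 hy
      exact ⟨X w * q, hX w e q hq, rfl⟩
  have := S.hv_left h0 h3
  rw [hv_shift, add_sub_cancel_right] at this
  exact this

end Step

end Colon

end

/-! ### Powers of edge ideals with the max-flow min-cut property -/

noncomputable section

namespace Clutter

variable {K : Type} [Field K] {n : ℕ} {C : Clutter n}

theorem IsCover.exists_isMinCover {s : Finset (Fin n)} (hs : IsCover C s) :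
    ∃ c ⊆ s, IsMinCover C c := by
  obtain ⟨c, hc, hmin⟩ := exists_minimal_le_of_wellFoundedLT (IsCover C) s hs
  exact ⟨c, hc, hmin.1, fun d hd hd' => le_antisymm hd (hmin.2 hd' hd)⟩

theorem HasMFMC.edge_nonempty (h : C.HasMFMC) {e : Finset (Fin n)} (he : e ∈ C.edges) :
    e.Nonempty := by
  obtain ⟨x, ⟨hx, -⟩, -⟩ := h 0
  by_contra hne
  rw [Finset.not_nonempty_iff_eq_empty] at hne
  have := hx.2 e he
  rw [hne, Finset.sum_empty] at this
  linarith

open Classical in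
/-- An integral packing of `α` by edges whose size is at least the `α`-weight of some minimal cover: the
support of an integral optimal solution `x` of the covering program is a cover, so it contains a
minimal one, of weight at most `⟨α, x⟩`. -/
theorem HasMFMC.exists_packing (h : C.HasMFMC) (α : Fin n → ℕ) :
    ∃ y : Finset (Fin n) → ℕ, (∀ i, ∑ e ∈ C.edges.filter (fun e => i ∈ e), y e ≤ α i) ∧
      ∃ c, IsMinCover C c ∧ ∑ i ∈ c, α i ≤ ∑ e ∈ C.edges, y e := by
  obtain ⟨x, ⟨hx, -⟩, y, ⟨-, hy, -⟩, heq⟩ := h α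
  refine ⟨y, hy, ?_⟩
  have hcov : IsCover C (Finset.univ.filter fun i => x i ≠ 0) := by
    intro e he
    by_contra! hcon
    have h0 : ∑ i ∈ e, (x i : ℝ) = 0 := Finset.sum_eq_zero fun i hi => by
      have := hcon i hi
      simp only [Finset.mem_filter, Finset.mem_univ, true_and, not_not] at this
      simp [this]
    have := hx.2 e he
    simp only at this
    linarith
  obtain ⟨c, hc, hmin⟩ := hcov.exists_isMinCover
  refine ⟨c, hmin, ?_⟩
  have heq' : ∑ i, α i * x i = ∑ e ∈ C.edges, y e := by exact_mod_cast heq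
  rw [← heq']
  calc ∑ i ∈ c, α i ≤ ∑ i ∈ c, α i * x i := Finset.sum_le_sum fun i hi => by
        have := hc hi
        simp only [Finset.mem_filter, Finset.mem_univ, true_and] at this
        exact Nat.le_mul_of_pos_right _ (Nat.pos_of_ne_zero this)
    _ ≤ ∑ i, α i * x i := Finset.sum_le_sum_of_subset (Finset.subset_univ c)

open Classical in
theorem sum_sum_inter (y : Finset (Fin n) → ℕ) (c : Finset (Fin n)) (E : Finset (Finset (Fin n))) :
    ∑ i ∈ c, ∑ e ∈ E.filter (fun e => i ∈ e), y e = ∑ e ∈ E, y e * (c ∩ e).card := by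
  simp_rw [Finset.sum_filter]
  rw [Finset.sum_comm]
  refine Finset.sum_congr rfl fun e _ => ?_
  rw [← Finset.sum_filter, Finset.sum_const, Finset.filter_mem_eq_inter, smul_eq_mul, mul_comm]

open Classical in
/-- An edge meeting every minimal cover exactly once. For `α = 1`, unmixedness makes every minimal cover
optimal, and complementary slackness shows that any edge in the support of an optimal packing works. -/
theorem exists_edge (hunm : C.Unmixed) (h : C.HasMFMC) (hne : C.edges.Nonempty) :
    ∃ e ∈ C.edges, ∀ c, IsMinCover C c → (c ∩ e).card = 1 := by
  obtain ⟨y, hy, c₀, hc₀, hle⟩ := h.exists_packing 1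
  have hpos : 0 < ∑ e ∈ C.edges, y e := by
    obtain ⟨f, hf⟩ := hne
    obtain ⟨i, -, hi⟩ := hc₀.1 f hf
    refine lt_of_lt_of_le ?_ hle
    simpa using Finset.card_pos.2 ⟨i, hi⟩
  obtain ⟨e, he, hye⟩ := Finset.exists_ne_zero_of_sum_ne_zero hpos.ne'
  refine ⟨e, he, fun c hc => ?_⟩
  have hge : ∀ f ∈ C.edges, y f ≤ y f * (c ∩ f).card := fun f hf => by
    obtain ⟨i, hi, hi'⟩ := hc.1 f hf
    exact Nat.le_mul_of_pos_right _ (Finset.card_pos.2 ⟨i, Finset.mem_inter.2 ⟨hi', hi⟩⟩)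
  have h1 : ∑ f ∈ C.edges, y f * (c ∩ f).card ≤ ∑ f ∈ C.edges, y f := by
    rw [← sum_sum_inter]
    calc _ ≤ ∑ i ∈ c, 1 := Finset.sum_le_sum fun i _ => hy i
      _ = ∑ i ∈ c₀, 1 := by simpa using hunm c c₀ hc hc₀
      _ ≤ _ := hle
  have h2 := (Finset.sum_eq_sum_iff_of_le hge).1 (le_antisymm (Finset.sum_le_sum hge) h1) e he
  exact Nat.eq_of_mul_eq_mul_left (Nat.pos_of_ne_zero hye) (by rw [← h2, mul_one])

/-- The exponent vector of the squarefree monomial `x_e`. -/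
def ind (e : Finset (Fin n)) : Fin n →₀ ℕ := ∑ i ∈ e, Finsupp.single i 1

theorem ind_apply [DecidableEq (Fin n)] (e : Finset (Fin n)) (i : Fin n) :
    ind e i = if i ∈ e then 1 else 0 := by
  simp [ind, Finsupp.finsetSum_apply, Finsupp.single_apply]

theorem prod_X (e : Finset (Fin n)) :
    (∏ i ∈ e, X i : MvPoly K (Fin n)) = monomial (ind e) 1 := by
  rw [ind, monomial_sum_one]; rfl

theorem sum_ind [DecidableEq (Fin n)] (c e : Finset (Fin n)) :
    ∑ i ∈ c, ind e i = (c ∩ e).card := by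
  simp [ind_apply]

/-- The exponent vectors of weight at least `k` on every minimal cover, that is, the exponents of the
monomials in the `k`-th symbolic power of the edge ideal. -/
def big (C : Clutter n) (k : ℕ) : Set (Fin n →₀ ℕ) :=
  {a | ∀ c, IsMinCover C c → k ≤ ∑ i ∈ c, a i}

theorem big_mono {k : ℕ} {a b : Fin n →₀ ℕ} (hab : a ≤ b) (ha : a ∈ C.big k) : b ∈ C.big k :=
  fun c hc => (ha c hc).trans (Finset.sum_le_sum fun i _ => hab i)

theorem mem_span_big (k : ℕ) (p : MvPoly K (Fin n)) :
    p ∈ Ideal.span ((fun a => monomial a (1 : K)) '' C.big k) ↔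
      ∀ a, coeff a p ≠ 0 → a ∈ C.big k := by
  rw [mem_ideal_span_monomial_image]
  constructor
  · intro h a ha
    obtain ⟨s, hs, hle⟩ := h a (by simpa using ha)
    exact big_mono hle hs
  · intro h a ha
    exact ⟨a, h a (by simpa using ha), le_rfl⟩

theorem edgeIdeal_pow_le (k : ℕ) :
    edgeIdeal K C ^ k ≤ Ideal.span ((fun a => monomial a (1 : K)) '' C.big k) := by
  classical
  induction k with
  | zero =>
    intro p _
    rw [mem_span_big]
    exact fun a _ c _ => Nat.zero_le _
  | succ k ih =>
    rw [pow_succ]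
    refine (Ideal.mul_mono_left ih).trans ?_
    rw [edgeIdeal, Ideal.span_mul_span', Ideal.span_le]
    rintro _ ⟨_, ⟨a, ha, rfl⟩, _, ⟨e, he, rfl⟩, rfl⟩
    refine Ideal.subset_span ⟨a + ind e, fun c hc => ?_, ?_⟩
    · simp only [Finsupp.add_apply, Finset.sum_add_distrib]
      rw [sum_ind]
      obtain ⟨i, hi, hi'⟩ := hc.1 e he
      exact add_le_add (ha c hc) (Finset.card_pos.2 ⟨i, Finset.mem_inter.2 ⟨hi', hi⟩⟩)
    · simp only [prod_X, monomial_mul, mul_one]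

/-- Under the max-flow min-cut property the symbolic powers are the ordinary ones: a packing of the
exponent vector by `k` edges writes the monomial as a multiple of a product of `k` edge monomials. -/
theorem HasMFMC.mem_pow (h : C.HasMFMC) {k : ℕ} {a : Fin n →₀ ℕ} (ha : a ∈ C.big k) :
    monomial a (1 : K) ∈ edgeIdeal K C ^ k := by
  classical
  obtain ⟨y, hy, c, hc, hle⟩ := h.exists_packing a
  have h1 : (monomial (∑ e ∈ C.edges, y e • ind e) (1 : K)) ∈ edgeIdeal K C ^ k := by
    rw [monomial_sum_one]
    refine Ideal.pow_le_pow_right ((ha c hc).trans hle) ?_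
    rw [← Finset.prod_pow_eq_pow_sum]
    refine Ideal.prod_mem_prod fun e he => ?_
    rw [← one_pow (y e), ← monomial_pow, ← prod_X]
    have : (∏ i ∈ e, X i : MvPoly K (Fin n)) ∈ edgeIdeal K C := Ideal.subset_span ⟨e, he, rfl⟩
    exact Ideal.pow_mem_pow this _
  have h2 : ∑ e ∈ C.edges, y e • ind e ≤ a := by
    intro i
    refine le_trans (le_of_eq ?_) (hy i)
    rw [Finsupp.finsetSum_apply, Finset.sum_filter]
    refine Finset.sum_congr rfl fun e _ => ?_
    simp [ind_apply]
  obtain ⟨b, rfl⟩ := exists_add_of_le h2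
  have := Ideal.mul_mem_right (monomial b (1 : K)) _ h1
  rwa [monomial_mul, mul_one] at this

theorem HasMFMC.mem_pow_iff (h : C.HasMFMC) (k : ℕ) (p : MvPoly K (Fin n)) :
    p ∈ edgeIdeal K C ^ k ↔ ∀ a, coeff a p ≠ 0 → a ∈ C.big k :=
  ⟨fun hp => (mem_span_big k p).1 (edgeIdeal_pow_le k hp),
    fun hp => Colon.Mon.of_forall p fun a ha => h.mem_pow (hp a ha)⟩

theorem HasMFMC.mon (h : C.HasMFMC) (k : ℕ) : Colon.Mon (edgeIdeal K C ^ k) :=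
  fun p hp a ha => h.mem_pow ((h.mem_pow_iff k p).1 hp a ha)

/-- The edge `e` of `exists_edge` satisfies `I^k = (I^(k+1) : x_e)`, because multiplication by `x_e`
raises the weight on each minimal cover by exactly one. -/
theorem exists_colon (hunm : C.Unmixed) (h : C.HasMFMC) (hne : C.edges.Nonempty) (k : ℕ) :
    ∃ e : Finset (Fin n), ∀ p : MvPoly K (Fin n),
      p ∈ edgeIdeal K C ^ k ↔ (∏ i ∈ e, X i) * p ∈ edgeIdeal K C ^ (k + 1) := by
  classical
  obtain ⟨e, he, hc⟩ := exists_edge hunm h hne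
  refine ⟨e, fun p => ⟨fun hp => ?_, fun hp => ?_⟩⟩
  · rw [pow_succ']
    exact Ideal.mul_mem_mul (Ideal.subset_span ⟨e, he, rfl⟩) hp
  · rw [h.mem_pow_iff] at hp ⊢
    intro a ha c hmin
    have := hp (ind e + a) (by rwa [prod_X, coeff_monomial_mul, one_mul]) c hmin
    simp only [Finsupp.add_apply, Finset.sum_add_distrib] at this
    rw [sum_ind, hc c hmin] at this
    lia

theorem edgeIdeal_eq_bot (hne : ¬ C.edges.Nonempty) : edgeIdeal K C = ⊥ := by
  rw [Finset.not_nonempty_iff_eq_empty] at hne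
  rw [edgeIdeal, hne]
  simp

end Clutter

end

/-! ### Graded modules -/

noncomputable section

namespace Reg

open Kos Colon

variable {K : Type} [Field K] {n : ℕ}

/-- The homogeneous polynomials of degree `e`, for an integer `e` (only 0 when `e < 0`). -/
def hg (K : Type) [Field K] (n : ℕ) (e : ℤ) : AddSubgroup (MvPoly K (Fin n)) where
  carrier := {p | ∀ a, coeff a p ≠ 0 → (a.degree : ℤ) = e}
  zero_mem' := fun a ha => absurd (coeff_zero a) ha
  add_mem' := fun {p q} hp hq a ha => by
    by_cases h : coeff a p = 0
    · exact hq a (by rintro h'; rw [coeff_add, h, h', add_zero] at ha; exact ha rfl)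
    · exact hp a h
  neg_mem' := fun {p} hp a ha => hp a (by rintro h; rw [coeff_neg, h, neg_zero] at ha; exact ha rfl)

theorem mem_hg {e : ℤ} {p : MvPoly K (Fin n)} :
    p ∈ hg K n e ↔ ∀ a, coeff a p ≠ 0 → (a.degree : ℤ) = e := Iff.rfl

theorem homogComp_iff (e : ℤ) (p : MvPoly K (Fin n)) : HomogComp K (Fin n) e p ↔ p ∈ hg K n e := by
  unfold HomogComp
  rw [mem_hg]
  split_ifs with he
  · rw [mem_homogeneousSubmodule]
    constructor
    · intro h a ha
      have := h ha
      rw [Pi.one_def, ← Finsupp.degree_eq_weight_one] at this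
      lia
    · intro h a ha
      rw [Pi.one_def, ← Finsupp.degree_eq_weight_one]
      have := h a ha
      lia
  · constructor
    · rintro rfl a ha
      simp at ha
    · intro h
      ext a
      by_contra hc
      have := h a (by simpa using hc)
      lia

theorem X_mul_mem_hg (v : Fin n) (e : ℤ) (p : MvPoly K (Fin n)) (hp : p ∈ hg K n (e - 1)) :
    X v * p ∈ hg K n e := by
  intro a ha
  rw [coeff_X_mul'] at ha
  split_ifs at ha with hv
  · have h1 := hp _ ha
    have h2 : Finsupp.single v 1 + (a - Finsupp.single v 1) = a := add_tsub_cancel_of_le (by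
      simpa [Finsupp.single_le_iff, Nat.one_le_iff_ne_zero] using hv)
    have h3 := congrArg Finsupp.degree h2
    rw [map_add, Finsupp.degree_single] at h3
    lia
  · exact absurd rfl ha

theorem mul_mem_hg {a b : ℤ} {p q : MvPoly K (Fin n)} (hp : p ∈ hg K n a) (hq : q ∈ hg K n b) :
    p * q ∈ hg K n (a + b) := by
  classical
  intro c hc
  rw [coeff_mul] at hc
  obtain ⟨x, hx, hne⟩ := Finset.exists_ne_zero_of_sum_ne_zero hc
  rw [Finset.HasAntidiagonal.mem_antidiagonal] at hx
  rw [← hx, map_add, Nat.cast_add, hp _ (left_ne_zero_of_mul hne), hq _ (right_ne_zero_of_mul hne)]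

theorem δ_mem_hg (v : Fin n) (e : ℤ) (p : MvPoly K (Fin n)) (hp : p ∈ hg K n e) :
    δ v p ∈ hg K n (e - 1) := by
  intro a ha
  rw [coeff_δ] at ha
  have := hp _ ha
  rw [map_add, Finsupp.degree_single] at this
  push_cast at this
  lia

/-- The homogeneous component of degree `e`, which is 0 for `e < 0`. -/
def hcomp (e : ℤ) : MvPoly K (Fin n) →+ MvPoly K (Fin n) :=
  if 0 ≤ e then (homogeneousComponent e.toNat).toAddMonoidHom else 0

theorem coeff_hcomp (e : ℤ) (p : MvPoly K (Fin n)) (a : Fin n →₀ ℕ) :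
    coeff a (hcomp e p) = if (a.degree : ℤ) = e then coeff a p else 0 := by
  unfold hcomp
  split_ifs with h1 h2 h2
  · show coeff a (homogeneousComponent e.toNat p) = _
    rw [coeff_homogeneousComponent, if_pos (by lia)]
  · show coeff a (homogeneousComponent e.toNat p) = _
    rw [coeff_homogeneousComponent, if_neg (by lia)]
  · lia
  · simp

theorem hcomp_mem (e : ℤ) (p : MvPoly K (Fin n)) : hcomp e p ∈ hg K n e := fun a ha => by
  by_contra hc
  exact ha (by rw [coeff_hcomp, if_neg hc])

theorem hcomp_same {e : ℤ} {p : MvPoly K (Fin n)} (hp : p ∈ hg K n e) : hcomp e p = p := by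
  ext a
  rw [coeff_hcomp]
  split_ifs with h
  · rfl
  · by_contra hc
    exact h (hp a (Ne.symm hc))

theorem hcomp_ne {e e' : ℤ} {p : MvPoly K (Fin n)} (hp : p ∈ hg K n e) (he : e ≠ e') :
    hcomp e' p = 0 := by
  ext a
  rw [coeff_hcomp, coeff_zero]
  split_ifs with h
  · by_contra hc
    exact he ((hp a hc).symm.trans h)
  · rfl

theorem hcomp_fin (p : MvPoly K (Fin n)) : {e | hcomp e p ≠ 0}.Finite := by
  refine (p.support.finite_toSet.image fun a => (a.degree : ℤ)).subset fun e he => ?_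
  obtain ⟨a, ha⟩ := ne_zero_iff.1 he
  rw [coeff_hcomp] at ha
  split_ifs at ha with h
  · exact ⟨a, by simpa using ha, h⟩
  · exact absurd rfl ha

/-- A ℤ-grading on an `R`-module, given by the pieces `gr e` and the projections `π e` onto them. -/
structure GMod (K : Type) [Field K] (n : ℕ) (M : Type) [AddCommGroup M]
    [Module (MvPoly K (Fin n)) M] where
  gr : ℤ → AddSubgroup M
  π : ℤ → M →+ M
  smul_mem : ∀ {a b : ℤ} {p : MvPoly K (Fin n)} {m : M}, p ∈ hg K n a → m ∈ gr b → p • m ∈ gr (a + b)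
  π_mem : ∀ e m, π e m ∈ gr e
  π_same : ∀ {e m}, m ∈ gr e → π e m = m
  π_ne : ∀ {e e' m}, m ∈ gr e → e ≠ e' → π e' m = 0
  fin : ∀ m, {e | π e m ≠ 0}.Finite
  ext : ∀ m, (∀ e, π e m = 0) → m = 0

section GMod

variable {M N P : Type} [AddCommGroup M] [Module (MvPoly K (Fin n)) M]
  [AddCommGroup N] [Module (MvPoly K (Fin n)) N] [AddCommGroup P] [Module (MvPoly K (Fin n)) P]

theorem GMod.ops (G : GMod K n M) (L : List (Fin n)) :
    ∀ y ∈ Xs K L, ∀ e, ∀ m ∈ G.gr (e - 1), y • m ∈ G.gr e := by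
  intro y hy e m hm
  obtain ⟨v, -, rfl⟩ := List.mem_map.1 hy
  have h1 : (X v : MvPoly K (Fin n)) ∈ hg K n 1 := by
    intro a ha
    rw [coeff_X] at ha
    split_ifs at ha with h
    · rw [← h, Finsupp.degree_single]; rfl
    · exact absurd rfl ha
  have := G.smul_mem h1 hm
  rwa [add_sub_cancel] at this

theorem GMod.sum_eq (G : GMod K n M) (m : M) : ∑ e ∈ (G.fin m).toFinset, G.π e m = m := by
  rw [← sub_eq_zero]
  refine G.ext _ fun e => ?_
  rw [map_sub, map_sum, sub_eq_zero]
  by_cases he : e ∈ (G.fin m).toFinset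
  · rw [Finset.sum_eq_single e]
    · exact G.π_same (G.π_mem e m)
    · exact fun b _ hb => G.π_ne (G.π_mem b m) hb
    · exact fun h => absurd he h
  · have h0 : G.π e m = 0 := by simpa using he
    rw [h0]
    exact Finset.sum_eq_zero fun b hb => G.π_ne (G.π_mem b m) (by rintro rfl; exact he hb)

theorem GMod.map_π (G : GMod K n M) (H : GMod K n N) (φ : M →+ N)
    (hφ : ∀ e, ∀ m ∈ G.gr e, φ m ∈ H.gr e) (e : ℤ) (m : M) : φ (G.π e m) = H.π e (φ m) := by
  conv_rhs => rw [← G.sum_eq m, map_sum, map_sum]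
  by_cases he : e ∈ (G.fin m).toFinset
  · rw [Finset.sum_eq_single e]
    · exact (H.π_same (hφ _ _ (G.π_mem e m))).symm
    · exact fun b _ hb => H.π_ne (hφ _ _ (G.π_mem b m)) hb
    · exact fun h => absurd he h
  · have h0 : G.π e m = 0 := by simpa using he
    rw [h0, map_zero]
    exact (Finset.sum_eq_zero fun b hb => H.π_ne (hφ _ _ (G.π_mem b m))
      (by rintro rfl; exact he hb)).symm

/-- The grading on a submodule stable under the projections. -/
def GMod.sub (G : GMod K n M) (Z : Submodule (MvPoly K (Fin n)) M)
    (hZ : ∀ e, ∀ z ∈ Z, G.π e z ∈ Z) : GMod K n Z where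
  gr e := (G.gr e).comap Z.subtype.toAddMonoidHom
  π e := ((G.π e).comp Z.subtype.toAddMonoidHom).codRestrict Z fun z => hZ e z z.2
  smul_mem := fun hp hm => G.smul_mem hp hm
  π_mem := fun e m => G.π_mem e m
  π_same := fun hm => Subtype.ext (G.π_same hm)
  π_ne := fun hm he => Subtype.ext (G.π_ne hm he)
  fin := fun m => (G.fin m).subset fun _ he h => he (Subtype.ext h)
  ext := fun m h => Subtype.ext (G.ext m fun e => congrArg Subtype.val (h e))

theorem GMod.mem_sub (G : GMod K n M) (Z : Submodule (MvPoly K (Fin n)) M)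
    (hZ : ∀ e, ∀ z ∈ Z, G.π e z ∈ Z) (e : ℤ) (z : Z) : z ∈ (G.sub Z hZ).gr e ↔ (z : M) ∈ G.gr e :=
  Iff.rfl

theorem GMod.ker_stable (G : GMod K n M) (H : GMod K n N) (φ : M →ₗ[MvPoly K (Fin n)] N)
    (hφ : ∀ e, ∀ m ∈ G.gr e, φ m ∈ H.gr e) :
    ∀ e, ∀ z ∈ LinearMap.ker φ, G.π e z ∈ LinearMap.ker φ := by
  intro e z hz
  rw [LinearMap.mem_ker] at hz ⊢
  have := G.map_π H φ.toAddMonoidHom hφ e z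
  exact this.trans (by
    show H.π e (φ z) = 0
    rw [hz, map_zero])

theorem GMod.gses (G : GMod K n M) (H : GMod K n N) (φ : M →ₗ[MvPoly K (Fin n)] N)
    (hφ : ∀ e, ∀ m ∈ G.gr e, φ m ∈ H.gr e) (hs : Function.Surjective φ) (L : List (Fin n)) :
    GSES (Xs K L) (G.sub (LinearMap.ker φ) (G.ker_stable H φ hφ)).gr G.gr H.gr
      (LinearMap.ker φ).subtype.toAddMonoidHom φ.toAddMonoidHom where
  smulφ := fun _ _ _ => rfl
  smulψ := fun y _ m => map_smul φ y m
  inj := Subtype.val_injective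
  comp := fun m => m.2
  memψ := hφ
  memφ := fun _ _ hm => hm
  exact := fun e m hm h => ⟨⟨m, h⟩, hm, rfl⟩
  surj := fun e m hm => by
    obtain ⟨a, rfl⟩ := hs m
    exact ⟨G.π e a, G.π_mem e a, (G.map_π H φ.toAddMonoidHom hφ e a).trans (H.π_same hm)⟩
  ops := G.ops L

end GMod

/-- The graded free module `⊕_j R(-dg j)`. -/
def free {m : ℕ} (dg : Fin m → ℤ) : GMod K n (Fin m → MvPoly K (Fin n)) where
  gr e :=
    { carrier := {f | ∀ j, f j ∈ hg K n (e - dg j)}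
      zero_mem' := fun _ => zero_mem _
      add_mem' := fun hf hg j => add_mem (hf j) (hg j)
      neg_mem' := fun hf j => neg_mem (hf j) }
  π e :=
    { toFun := fun f j => hcomp (e - dg j) (f j)
      map_zero' := by ext; simp
      map_add' := fun f g => by ext; simp }
  smul_mem := fun {a b p f} hp hf j => by
    rw [show a + b - dg j = a + (b - dg j) by ring]
    exact mul_mem_hg hp (hf j)
  π_mem := fun _ f j => hcomp_mem _ (f j)
  π_same := fun hf => funext fun j => hcomp_same (hf j)
  π_ne := fun hf he => funext fun j => hcomp_ne (hf j) fun h => he (sub_left_injective h)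
  fin := fun f => by
    refine (Set.finite_iUnion fun j : Fin m => (hcomp_fin (f j)).image fun e => e + dg j).subset
      fun e he => ?_
    obtain ⟨j, hj⟩ := Function.ne_iff.1 he
    exact Set.mem_iUnion.2 ⟨j, e - dg j, hj, sub_add_cancel _ _⟩
  ext := fun f h => by
    funext j
    ext a
    have := congrArg (coeff a) (congrFun (h (a.degree + dg j)) j)
    replace this : coeff a (hcomp (a.degree + dg j - dg j) (f j)) = 0 := this
    rwa [coeff_hcomp, if_pos (by ring)] at this

theorem mem_free {m : ℕ} {dg : Fin m → ℤ} {e : ℤ} {f : Fin m → MvPoly K (Fin n)} :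
    f ∈ (free dg).gr e ↔ ∀ j, f j ∈ hg K n (e - dg j) := Iff.rfl

theorem isHomogVec_iff {m : ℕ} (dg : Fin m → ℤ) (e : ℤ) (f : Fin m → MvPoly K (Fin n)) :
    IsHomogVec K (Fin n) dg e f ↔ f ∈ (free dg).gr e :=
  forall_congr' fun _ => homogComp_iff _ _

theorem hv_free_pos {m : ℕ} (dg : Fin m → ℤ) (L : List (Fin n)) (hL : L.Nodup) (i e : ℤ)
    (hi : 0 < i) : HV (free (K := K) (n := n) dg).gr (Xs K L) i e := by
  refine hv_of_div _ _ (hL.map (X_injective)) ((free dg).ops L) ?_ i e hi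
  intro x hx
  obtain ⟨v, -, rfl⟩ := List.mem_map.1 hx
  refine ⟨{ toFun := fun f j => δ v (f j)
            map_zero' := by ext; simp
            map_add' := fun f g => by ext; simp }, ?_, ?_, ?_⟩
  · intro f
    funext j
    exact δ_X v (f j)
  · intro e f hf j
    rw [show e - 1 - dg j = e - dg j - 1 by ring]
    exact δ_mem_hg v _ _ (hf j)
  · intro y hy hne f
    obtain ⟨w, -, rfl⟩ := List.mem_map.1 hy
    funext j
    exact δ_X_ne (by rintro rfl; exact hne rfl) (f j)

/-- A homogeneous vector each of whose terms is divisible by a variable from `L` is decomposed by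
splitting off the terms divisible by each variable in turn. -/
theorem dec_free {m : ℕ} (dg : Fin m → ℤ) (e : ℤ) (L : List (Fin n)) :
    ∀ f ∈ (free (K := K) (n := n) dg).gr e, (∀ j a, coeff a (f j) ≠ 0 → ∃ w ∈ L, a w ≠ 0) →
      Dec (free (K := K) (n := n) dg).gr e (Xs K L) f := by
  induction L with
  | nil =>
    intro f _ h
    show f = 0
    funext j
    ext a
    by_contra hc
    obtain ⟨w, hw, -⟩ := h j a hc
    simp at hw
  | cons v L ih =>
    intro f hf h
    have h1 : (fun j => δ v (f j)) ∈ (free (K := K) (n := n) dg).gr (e - 1) := fun j => by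
      rw [show e - 1 - dg j = e - dg j - 1 by ring]
      exact δ_mem_hg v _ _ (hf j)
    refine ⟨fun j => δ v (f j), h1, ih _ (sub_mem hf ?_) ?_⟩
    · exact (free dg).ops [v] (X v) (by simp) e _ h1
    · intro j a ha
      replace ha : coeff a (θ v (f j)) ≠ 0 := ha
      rw [coeff_θ] at ha
      split_ifs at ha with hv
      · obtain ⟨w, hw, hne⟩ := h j a ha
        refine ⟨w, ?_, hne⟩
        rcases List.mem_cons.1 hw with rfl | hw
        · exact absurd hv hne
        · exact hw
      · exact absurd rfl ha

theorem hv_free_zero {m : ℕ} (dg : Fin m → ℤ) (L : List (Fin n)) (hL : ∀ v, v ∈ L) (e : ℤ)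
    (he : ∀ j, dg j < e) : HV (free (K := K) (n := n) dg).gr (Xs K L) 0 e := by
  rw [hv_zero_iff]
  intro f hf
  refine dec_free dg e L f hf fun j a ha => ?_
  have h1 := hf j a ha
  have h2 := he j
  by_contra! hc
  have : a = 0 := Finsupp.ext fun w => hc w (hL w)
  rw [this, map_zero] at h1
  simp at h1
  lia

/-- The Koszul homology of a graded free module is concentrated in homological degree 0, where it sits
in the degrees of the generators. -/
theorem hv_free {m : ℕ} (dg : Fin m → ℤ) (L : List (Fin n)) (hL : L.Nodup) (hL' : ∀ v, v ∈ L)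
    (i e : ℤ) (he : i = 0 → ∀ j, dg j < e) : HV (free (K := K) (n := n) dg).gr (Xs K L) i e := by
  rcases lt_trichotomy i 0 with h | h | h
  · exact hv_of_neg _ _ h
  · subst h; exact hv_free_zero dg L hL' e (he rfl)
  · exact hv_free_pos dg L hL i e h

end Reg

end

/-! ### Graded covers and Nakayama -/

noncomputable section

namespace Reg

open Kos Colon

variable {K : Type} [Field K] {n : ℕ}

theorem hcomp_mem_ideal {I : Ideal (MvPoly K (Fin n))} (hI : Mon I) (e : ℤ) :
    ∀ p ∈ I, hcomp e p ∈ I := fun p hp => Mon.of_forall _ fun a ha => hI p hp a (by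
  rw [coeff_hcomp] at ha
  aesop)

/-- The grading on `R/I` for a monomial ideal `I`. -/
def quot (I : Ideal (MvPoly K (Fin n))) (hI : Mon I) : GMod K n (MvPoly K (Fin n) ⧸ I) :=
  have h := fun e => (exists_lift (hcomp e) (hcomp_mem_ideal hI e)).choose_spec
  { gr := 𝓠 (hg K n) I
    π := fun e => (exists_lift (hcomp e) (hcomp_mem_ideal hI e)).choose
    smul_mem := by
      rintro a b p _ hp ⟨q, hq, rfl⟩
      exact ⟨p * q, mul_mem_hg hp hq, rfl⟩
    π_mem := by
      intro e m
      obtain ⟨p, rfl⟩ := Ideal.Quotient.mk_surjective m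
      rw [h]
      exact ⟨_, hcomp_mem e p, rfl⟩
    π_same := by
      rintro e _ ⟨p, hp, rfl⟩
      exact (h e p).trans (by rw [hcomp_same hp]; rfl)
    π_ne := by
      rintro e e' _ ⟨p, hp, rfl⟩ he
      exact (h e' p).trans (by rw [hcomp_ne hp he, map_zero])
    fin := by
      intro m
      obtain ⟨p, rfl⟩ := Ideal.Quotient.mk_surjective m
      refine (hcomp_fin p).subset fun e he hc => he ?_
      rw [h, hc, map_zero]
    ext := by
      intro m hm
      obtain ⟨p, rfl⟩ := Ideal.Quotient.mk_surjective m
      rw [Ideal.Quotient.eq_zero_iff_mem]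
      refine Mon.of_forall p fun a ha => ?_
      have h1 := hm a.degree
      rw [h, Ideal.Quotient.eq_zero_iff_mem] at h1
      exact hI _ h1 a (by rwa [coeff_hcomp, if_pos rfl]) }

theorem quot_gr (I : Ideal (MvPoly K (Fin n))) (hI : Mon I) : (quot I hI).gr = 𝓠 (hg K n) I := rfl

theorem mem_quotComp (I : Ideal (MvPoly K (Fin n))) (e : ℤ) (m : MvPoly K (Fin n) ⧸ I) :
    m ∈ QuotComp K (Fin n) I e ↔ m ∈ 𝓠 (hg K n) I e := by
  rw [mem_𝓠]
  simp only [← homogComp_iff]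
  unfold QuotComp HomogComp
  split_ifs with he
  · exact Iff.rfl
  · simp [eq_comm]

section Cover

variable {M : Type} [AddCommGroup M] [Module (MvPoly K (Fin n)) M]

theorem exists_cover_of_finset (G : GMod K n M) (p : ℤ → Prop) (T : Finset M)
    (hT : ∀ t ∈ T, ∃ e, p e ∧ t ∈ G.gr e) (hspan : Submodule.span (MvPoly K (Fin n)) (T : Set M) = ⊤) :
    ∃ (m : ℕ) (dg : Fin m → ℤ) (φ : (Fin m → MvPoly K (Fin n)) →ₗ[MvPoly K (Fin n)] M),
      Function.Surjective φ ∧ (∀ e, ∀ f ∈ (free dg).gr e, φ f ∈ G.gr e) ∧ ∀ j, p (dg j) := by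
  choose d hd using fun t : T => hT t t.2
  refine ⟨T.card, fun j => d (T.equivFin.symm j),
    Fintype.linearCombination (MvPoly K (Fin n)) fun j => ((T.equivFin.symm j : T) : M), ?_, ?_,
    fun j => (hd _).1⟩
  · rw [← LinearMap.range_eq_top, Fintype.range_linearCombination, ← hspan]
    congr 1
    ext x
    constructor
    · rintro ⟨j, rfl⟩
      exact (T.equivFin.symm j).2
    · intro hx
      exact ⟨T.equivFin ⟨x, hx⟩, by simp⟩
  · intro e f hf
    rw [Fintype.linearCombination_apply]
    refine sum_mem fun j _ => ?_
    have := G.smul_mem (hf j) (hd (T.equivFin.symm j)).2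
    rwa [sub_add_cancel] at this

theorem exists_cover_of_span [Module.Finite (MvPoly K (Fin n)) M] (G : GMod K n M) (p : ℤ → Prop)
    (hspan : Submodule.span (MvPoly K (Fin n)) {m : M | ∃ e, p e ∧ m ∈ G.gr e} = ⊤) :
    ∃ (m : ℕ) (dg : Fin m → ℤ) (φ : (Fin m → MvPoly K (Fin n)) →ₗ[MvPoly K (Fin n)] M),
      Function.Surjective φ ∧ (∀ e, ∀ f ∈ (free dg).gr e, φ f ∈ G.gr e) ∧ ∀ j, p (dg j) := by
  have h1 : (Submodule.span (MvPoly K (Fin n)) {m : M | ∃ e, p e ∧ m ∈ G.gr e}).FG := by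
    rw [hspan]; exact Module.Finite.fg_top
  obtain ⟨T, hT, h2⟩ := (Submodule.fg_span_iff_fg_span_finset_subset _).1 h1
  exact exists_cover_of_finset G p T (fun t ht => hT ht) (by rw [← h2, hspan])

theorem exists_cover [Module.Finite (MvPoly K (Fin n)) M] (G : GMod K n M) :
    ∃ (m : ℕ) (dg : Fin m → ℤ) (φ : (Fin m → MvPoly K (Fin n)) →ₗ[MvPoly K (Fin n)] M),
      Function.Surjective φ ∧ ∀ e, ∀ f ∈ (free dg).gr e, φ f ∈ G.gr e := by
  obtain ⟨m, dg, φ, h1, h2, -⟩ := exists_cover_of_span G (fun _ => True) (by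
    rw [eq_top_iff]
    intro m _
    rw [← G.sum_eq m]
    exact sum_mem fun e _ => Submodule.subset_span ⟨e, trivial, G.π_mem e m⟩)
  exact ⟨m, dg, φ, h1, h2⟩

theorem exists_lower_bound [Module.Finite (MvPoly K (Fin n)) M] (G : GMod K n M) :
    ∃ b : ℤ, ∀ e < b, ∀ m ∈ G.gr e, m = 0 := by
  obtain ⟨r, dg, φ, hs, hφ⟩ := exists_cover G
  obtain ⟨b, hb⟩ := (Set.finite_range dg).bddBelow
  refine ⟨b, fun e he m hm => ?_⟩
  obtain ⟨f, rfl⟩ := hs m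
  have h1 := (free dg).map_π G φ.toAddMonoidHom hφ e f
  have h2 : (free dg).π e f = 0 := by
    funext j
    ext a
    by_contra hc
    have := (free dg).π_mem e f j a hc
    have := hb ⟨j, rfl⟩
    lia
  rw [h2, map_zero] at h1
  exact (h1.trans (G.π_same hm)).symm

theorem mem_of_dec (G : GMod K n M) (N : Submodule (MvPoly K (Fin n)) M) (e : ℤ)
    (hN : ∀ m ∈ G.gr (e - 1), m ∈ N) (l : List (MvPoly K (Fin n))) :
    ∀ m, Dec G.gr e l m → m ∈ N := by
  induction l with
  | nil => rintro m rfl; exact zero_mem _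
  | cons x l ih =>
    rintro m ⟨m', hm', h⟩
    have := add_mem (ih _ h) (N.smul_mem x (hN m' hm'))
    rwa [sub_add_cancel] at this

/-- Graded Nakayama lemma: a finite graded module whose `H_0(x; M)` vanishes above degree `s` is generated
in degrees at most `s`. The induction on degrees starts at a lower bound for the degrees of `M`. -/
theorem exists_cover_le [Module.Finite (MvPoly K (Fin n)) M] (G : GMod K n M) (L : List (Fin n))
    (s : ℤ) (h : ∀ e, s < e → HV G.gr (Xs K L) 0 e) :
    ∃ (m : ℕ) (dg : Fin m → ℤ) (φ : (Fin m → MvPoly K (Fin n)) →ₗ[MvPoly K (Fin n)] M),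
      Function.Surjective φ ∧ (∀ e, ∀ f ∈ (free dg).gr e, φ f ∈ G.gr e) ∧ ∀ j, dg j ≤ s := by
  refine exists_cover_of_span G (fun e => e ≤ s) ?_
  obtain ⟨b, hb⟩ := exists_lower_bound G
  set N := Submodule.span (MvPoly K (Fin n)) {m : M | ∃ e, e ≤ s ∧ m ∈ G.gr e}
  have key : ∀ k : ℕ, ∀ e : ℤ, e < b + k → ∀ m ∈ G.gr e, m ∈ N := by
    intro k
    induction k with
    | zero =>
      intro e he m hm
      rw [hb e (by simpa using he) m hm]
      exact zero_mem _
    | succ k ih =>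
      intro e he m hm
      by_cases hes : e ≤ s
      · exact Submodule.subset_span ⟨e, hes, hm⟩
      · exact mem_of_dec G N e (ih (e - 1) (by push_cast at he; lia)) _ m
          ((hv_zero_iff _ _ _).1 (h e (by lia)) m hm)
  rw [eq_top_iff]
  intro m _
  rw [← G.sum_eq m]
  exact sum_mem fun e _ => key (e - b + 1).toNat e (by lia) _ (G.π_mem e m)

end Cover

variable {L : List (Fin n)}

/-- Each Koszul homology module of a finite graded module vanishes in large internal degrees, by dimension
shifting along a finite free cover. -/
theorem exists_bound (hL : L.Nodup) (hL' : ∀ v, v ∈ L) (i : ℕ) :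
    ∀ (M : Type) [AddCommGroup M] [Module (MvPoly K (Fin n)) M] [Module.Finite (MvPoly K (Fin n)) M]
      (G : GMod K n M), ∃ B : ℤ, ∀ e, B < e → HV G.gr (Xs K L) i e := by
  induction i with
  | zero =>
    intro M _ _ _ G
    obtain ⟨r, dg, φ, hs, hφ⟩ := exists_cover G
    obtain ⟨B, hB⟩ := (Set.finite_range dg).bddAbove
    refine ⟨B, fun e he => ?_⟩
    exact (GMod.gses (free dg) G φ hφ hs L).hv_right (j := -1) (by simp) (hv_of_neg _ _ (by simp))
      (hv_free dg L hL hL' _ e fun _ j => lt_of_le_of_lt (hB ⟨j, rfl⟩) he)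
  | succ i ih =>
    intro M _ _ _ G
    obtain ⟨r, dg, φ, hs, hφ⟩ := exists_cover G
    obtain ⟨B, hB⟩ := ih (LinearMap.ker φ) ((free dg).sub _ (GMod.ker_stable (free dg) G φ hφ))
    refine ⟨B, fun e he => ?_⟩
    exact (GMod.gses (free dg) G φ hφ hs L).hv_right (j := i) (by simp) (hB e he)
      (hv_free dg L hL hL' _ e fun h => by lia)

theorem exists_reg_bound (hL : L.Nodup) (hL' : ∀ v, v ∈ L) (M : Type) [AddCommGroup M]
    [Module (MvPoly K (Fin n)) M] [Module.Finite (MvPoly K (Fin n)) M]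
    (G : GMod K n M) : ∃ s : ℤ, ∀ i e : ℤ, i + s < e → HV G.gr (Xs K L) i e := by
  choose B hB using fun i : ℕ => exists_bound (K := K) hL hL' i M G
  obtain ⟨s, hs⟩ := ((Set.finite_lt_nat (L.length + 1)).image fun i => B i - i).bddAbove
  refine ⟨s, fun i e he => ?_⟩
  rcases lt_or_ge i 0 with hi | hi
  · exact hv_of_neg _ _ hi
  · lift i to ℕ using hi
    by_cases hi' : i < L.length + 1
    · have := hs ⟨i, hi', rfl⟩
      exact hB i e (by simp only at this; lia)
    · exact hv_of_gt _ _ (by simp; lia)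

end Reg

end

/-! ### Koszul homology and regularity -/

noncomputable section

namespace Reg

open Kos Colon

variable {K : Type} [Field K] {n : ℕ} {I : Ideal (MvPoly K (Fin n))} {L : List (Fin n)}

/-- The syzygy module inside the `t`-th free module of a resolution. -/
def syz (F : GradedFreeRes K (Fin n) I) :
    (t : ℕ) → Submodule (MvPoly K (Fin n)) (Fin (F.rk t) → MvPoly K (Fin n))
  | 0 => LinearMap.ker F.aug
  | t + 1 => LinearMap.ker (F.dmap t)

theorem range_dmap (F : GradedFreeRes K (Fin n) I) (t : ℕ) :
    LinearMap.range (F.dmap t) = syz F t := by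
  cases t with
  | zero => exact (LinearMap.exact_iff.1 F.exact0).symm
  | succ t => exact (LinearMap.exact_iff.1 (F.exactS t)).symm

/-- Dimension shifting along the resolution; `W` is kept as a variable equal to `syz F t` so that the
statement also applies to the kernel of a corestricted differential. The homological degree is `k - 1`
to let the induction start at a vanishing group. -/
theorem hv_syz (hL : L.Nodup) (hL' : ∀ v, v ∈ L) (F : GradedFreeRes K (Fin n) I) (s : ℤ)
    (hF : ∀ i j, F.dg i j - i ≤ s) (k : ℕ) :
    ∀ (t : ℕ) (W : Submodule (MvPoly K (Fin n)) (Fin (F.rk t) → MvPoly K (Fin n)))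
      (_ : W = syz F t) (hst : ∀ e, ∀ z ∈ W, (free (F.dg t)).π e z ∈ W) (e : ℤ),
      k + s + t < e → HV ((free (F.dg t)).sub W hst).gr (Xs K L) (k - 1) e := by
  induction k with
  | zero => intro t W _ hst e _; exact hv_of_neg _ _ (by simp)
  | succ k ih =>
    intro t W hW hst e he
    have hmem : ∀ f, F.dmap t f ∈ W := fun f => by
      rw [hW, ← range_dmap]
      exact ⟨f, rfl⟩
    have hφ : ∀ e, ∀ f ∈ (free (F.dg (t + 1))).gr e,
        (F.dmap t).codRestrict W hmem f ∈ ((free (F.dg t)).sub W hst).gr e := fun e f hf =>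
      (isHomogVec_iff _ _ _).1 (F.graded t e f ((isHomogVec_iff _ _ _).2 hf))
    have hs : Function.Surjective ((F.dmap t).codRestrict W hmem) := by
      rintro ⟨z, hz⟩
      rw [hW, ← range_dmap] at hz
      obtain ⟨f, hf⟩ := hz
      exact ⟨f, Subtype.ext hf⟩
    refine (GMod.gses _ _ _ hφ hs L).hv_right (j := k - 1) (by push_cast; ring)
      (ih (t + 1) _ (LinearMap.ker_codRestrict _ _ _) _ e (by push_cast at he ⊢; lia)) ?_
    refine hv_free _ L hL hL' _ e fun hk j => ?_
    have := hF (t + 1) j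
    push_cast at this he hk
    lia

/-- A graded free resolution with `F_i` generated in degrees at most `i + s` forces the Koszul homology
`H_i(x; R/I)_e` to vanish for `e > i + s`. -/
theorem hv_of_resBound (hI : Mon I) (hL : L.Nodup) (hL' : ∀ v, v ∈ L) {s : ℤ}
    (h : ResBound K (Fin n) I s) (i e : ℤ) (hie : i + s < e) :
    HV (𝓠 (hg K n) I) (Xs K L) i e := by
  obtain ⟨F, hF⟩ := h
  rcases lt_or_ge i 0 with hi | hi
  · exact hv_of_neg _ _ hi
  lift i to ℕ using hi
  have hφ : ∀ e, ∀ f ∈ (free (F.dg 0)).gr e, F.aug f ∈ (quot I hI).gr e := fun e f hf =>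
    (mem_quotComp I e _).1 (F.aug_graded e f ((isHomogVec_iff _ _ _).2 hf))
  refine (GMod.gses _ (quot I hI) _ hφ F.aug_surj L).hv_right (j := i - 1) (by ring)
    (hv_syz hL hL' F s hF i 0 _ rfl _ e (by simpa using hie)) ?_
  refine hv_free _ L hL hL' _ e fun hk j => ?_
  have := hF 0 j
  push_cast at this
  lia

/-- A graded submodule `Z` of a graded free module `⊕_j R(-dg j)`. -/
structure GSub (K : Type) [Field K] (n : ℕ) where
  rank : ℕ
  dg : Fin rank → ℤ
  Z : Submodule (MvPoly K (Fin n)) (Fin rank → MvPoly K (Fin n))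
  stable : ∀ e, ∀ z ∈ Z, (free dg).π e z ∈ Z

/-- The grading of `S.Z` induced by the ambient free module. -/
def GSub.toGMod (S : GSub K n) : GMod K n S.Z := (free S.dg).sub S.Z S.stable

/-- `H_i(x; Z)_e = 0` whenever `e > i + r`. -/
def GSub.Bound (L : List (Fin n)) (r : ℤ) (S : GSub K n) : Prop :=
  ∀ i e : ℤ, i + r < e → HV S.toGMod.gr (Xs K L) i e

/-- A free cover by generators of degree at most `r`; its kernel satisfies the same vanishing condition
with `r + 1`. -/
theorem exists_cover_bound (hL : L.Nodup) (hL' : ∀ v, v ∈ L) {M : Type} [AddCommGroup M]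
    [Module (MvPoly K (Fin n)) M] [Module.Finite (MvPoly K (Fin n)) M] (G : GMod K n M) (r : ℤ)
    (h : ∀ i e : ℤ, i + r < e → HV G.gr (Xs K L) i e) :
    ∃ S : GSub K n, S.Bound L (r + 1) ∧
      ∃ φ : (Fin S.rank → MvPoly K (Fin n)) →ₗ[MvPoly K (Fin n)] M,
        Function.Surjective φ ∧ LinearMap.ker φ = S.Z ∧
        (∀ e, ∀ f ∈ (free S.dg).gr e, φ f ∈ G.gr e) ∧ ∀ j, S.dg j ≤ r := by
  obtain ⟨m, dg, φ, hs, hφ, hdg⟩ := exists_cover_le G L r fun e he => h 0 e (by simpa using he)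
  refine ⟨⟨m, dg, LinearMap.ker φ, GMod.ker_stable _ G φ hφ⟩, ?_, φ, hs, rfl, hφ, hdg⟩
  intro i e hie
  refine (GMod.gses _ G φ hφ hs L).hv_left (h _ _ (by lia)) ?_
  refine hv_free _ L hL hL' _ e fun hi j => ?_
  have := hdg j
  lia

theorem exists_next (hL : L.Nodup) (hL' : ∀ v, v ∈ L) (r : ℤ) (S : GSub K n) (h : S.Bound L r) :
    ∃ S' : GSub K n, S'.Bound L (r + 1) ∧
      ∃ φ : (Fin S'.rank → MvPoly K (Fin n)) →ₗ[MvPoly K (Fin n)] (Fin S.rank → MvPoly K (Fin n)),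
        LinearMap.range φ = S.Z ∧ LinearMap.ker φ = S'.Z ∧
        (∀ e, ∀ f ∈ (free S'.dg).gr e, φ f ∈ (free S.dg).gr e) ∧ ∀ j, S'.dg j ≤ r := by
  obtain ⟨S', hb, φ, hs, hk, hφ, hdg⟩ := exists_cover_bound hL hL' S.toGMod r h
  refine ⟨S', hb, S.Z.subtype.comp φ, ?_, ?_, fun e f hf => hφ e f hf, hdg⟩
  · rw [LinearMap.range_comp_of_range_eq_top _ (LinearMap.range_eq_top.2 hs), Submodule.range_subtype]
  · rw [LinearMap.ker_comp_of_ker_eq_bot _ (Submodule.ker_subtype _), hk]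

/-- Converse of `hv_of_resBound`: iterating `exists_next` builds a graded free resolution with the
required degree bounds. -/
theorem resBound_of_hv (hI : Mon I) (hL : L.Nodup) (hL' : ∀ v, v ∈ L) {s : ℤ}
    (h : ∀ i e : ℤ, i + s < e → HV (𝓠 (hg K n) I) (Xs K L) i e) : ResBound K (Fin n) I s := by
  obtain ⟨S₀, hb₀, ε, hε, hkε, hgε, hdε⟩ := exists_cover_bound hL hL' (quot I hI) s h
  choose nxt hb φ hr hk hg hd using
    fun (t : ℕ) (S : GSub K n) (hS : S.Bound L (s + 1 + t)) => exists_next hL hL' (s + 1 + t) S hS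
  let seq : (t : ℕ) → {S : GSub K n // S.Bound L (s + 1 + t)} := fun t =>
    Nat.rec ⟨S₀, by simpa using hb₀⟩ (fun t S => ⟨nxt t S.1 S.2, by
      have := hb t S.1 S.2
      rw [add_assoc] at this
      exact_mod_cast this⟩) t
  refine ⟨{ rk := fun t => (seq t).1.rank
            dg := fun t => (seq t).1.dg
            dmap := fun t => φ t (seq t).1 (seq t).2
            aug := ε
            aug_surj := hε
            exact0 := LinearMap.exact_iff.2 (hkε.trans (hr 0 (seq 0).1 (seq 0).2).symm)
            exactS := fun t => LinearMap.exact_iff.2 ((hk t (seq t).1 (seq t).2).trans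
              (hr (t + 1) (seq (t + 1)).1 (seq (t + 1)).2).symm)
            graded := fun t e f hf => (isHomogVec_iff _ _ _).2
              (hg t (seq t).1 (seq t).2 e f ((isHomogVec_iff _ _ _).1 hf))
            aug_graded := fun e f hf => (mem_quotComp I e _).2
              (hgε e f ((isHomogVec_iff _ _ _).1 hf)) }, ?_⟩
  intro t j
  cases t with
  | zero =>
    have : S₀.dg j ≤ s := hdε j
    show S₀.dg j - ((0 : ℕ) : ℤ) ≤ s
    simpa using this
  | succ t =>
    have := hd t (seq t).1 (seq t).2 j
    show (nxt t (seq t).1 (seq t).2).dg j - ((t + 1 : ℕ) : ℤ) ≤ s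
    push_cast
    lia

theorem exists_resBound (hI : Mon I) : ∃ s, ResBound K (Fin n) I s := by
  obtain ⟨s, hs⟩ := exists_reg_bound (K := K) (List.nodup_finRange n) List.mem_finRange _ (quot I hI)
  exact ⟨s, resBound_of_hv hI (List.nodup_finRange n) List.mem_finRange hs⟩

/-- The variables can be listed with a prescribed one in front. -/
theorem exists_list (v : Fin n) : ∃ L : List (Fin n), (v :: L).Nodup ∧ ∀ w, w ∈ v :: L := by
  refine ⟨(List.finRange n).erase v, ?_, fun w => ?_⟩
  · rw [List.nodup_cons]
    exact ⟨(List.nodup_finRange n).not_mem_erase, (List.nodup_finRange n).erase v⟩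
  · by_cases h : w = v
    · simp [h]
    · exact List.mem_cons_of_mem _ ((List.mem_erase_of_ne h).2 (List.mem_finRange w))

theorem resBound_colon {J : Ideal (MvPoly K (Fin n))} (hI : Mon I) {v : Fin n}
    (hJ : ∀ p, p ∈ J ↔ X v * p ∈ I) {s : ℤ} (h : ResBound K (Fin n) I s) :
    ResBound K (Fin n) J s := by
  obtain ⟨L, hL, hL'⟩ := exists_list v
  have H := hv_of_resBound hI hL hL' h
  exact resBound_of_hv (hI.colon v hJ) hL hL' fun i e hie =>
    hv_colon X_mul_mem_hg δ_mem_hg hI hJ L (List.nodup_cons.1 hL).1 i e (H _ _ (by lia))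
      (H _ _ (by lia)) (H _ _ (by lia))

/-- A property of monomial ideals inherited by `(I : x_v)` for each variable is inherited by the colon
with any squarefree monomial. -/
theorem colon_induction {Q : Ideal (MvPoly K (Fin n)) → Prop}
    (hQ : ∀ (I J : Ideal (MvPoly K (Fin n))) (v : Fin n), Mon I → (∀ p, p ∈ J ↔ X v * p ∈ I) →
      Q I → Q J) (E : Finset (Fin n)) :
    ∀ I J : Ideal (MvPoly K (Fin n)), Mon I → (∀ p, p ∈ J ↔ (∏ i ∈ E, X i) * p ∈ I) → Q I → Q J := by
  classical
  induction E using Finset.induction_on with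
  | empty =>
    intro I J _ hJ h
    have : J = I := by ext p; simpa using hJ p
    rwa [this]
  | insert v E hv ih =>
    intro I J hI hJ h
    let I' : Ideal (MvPoly K (Fin n)) :=
      Submodule.comap (LinearMap.mulLeft (MvPoly K (Fin n)) (X v)) I
    have hI' : ∀ p, p ∈ I' ↔ X v * p ∈ I := fun p => Iff.rfl
    refine ih I' J (hI.colon v hI') (fun p => ?_) (hQ I I' v hI hI' h)
    rw [hJ, hI', Finset.prod_insert hv, mul_assoc]

/-- Comparison of regularities through the bounds they satisfy. `CMreg` is `⊥` if there is no least
bound, so the nontrivial point is that a least bound for `J` gives a least bound for `I`. -/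
theorem cmreg_le {J : Ideal (MvPoly K (Fin n))} (hI : Mon I)
    (h : ∀ s, ResBound K (Fin n) I s → ResBound K (Fin n) J s) :
    CMreg K (Fin n) J ≤ CMreg K (Fin n) I := by
  classical
  unfold CMreg
  by_cases hJ : ∃ r : ℤ, ResBound K (Fin n) J r ∧ ∀ s : ℤ, ResBound K (Fin n) J s → r ≤ s
  · obtain ⟨r, hr, hmin⟩ := hJ
    have hI' : ∃ r : ℤ, ResBound K (Fin n) I r ∧ ∀ s : ℤ, ResBound K (Fin n) I s → r ≤ s :=
      Int.exists_least_of_bdd ⟨r, fun z hz => hmin z (h z hz)⟩ (exists_resBound hI)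
    have hJ : ∃ r : ℤ, ResBound K (Fin n) J r ∧ ∀ s : ℤ, ResBound K (Fin n) J s → r ≤ s :=
      ⟨r, hr, hmin⟩
    rw [dif_pos hJ, dif_pos hI', WithBot.coe_le_coe]
    exact hJ.choose_spec.2 _ (h _ hI'.choose_spec.1)
  · rw [dif_neg hJ]
    exact bot_le

end Reg

end

/-! ### Two versions of Ext -/

noncomputable section
namespace Dep

section Bridge
variable {R : Type} [CommRing R] (X Y : ModuleCat.{0} R)

/-- Vanishing of the derived-functor `Ext`, read off from a projective resolution. For `i = 0` the junk
index `j = 0` with zero differential gives the right condition. -/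
theorem old_iff_exact (i j : ℕ) (hij : (ComplexShape.up ℕ).prev i = j) (P : ProjectiveResolution X) :
    Subsingleton (((_root_.Ext R (ModuleCat.{0} R) i).obj (op X)).obj Y) ↔
      ∀ f : P.complex.X i ⟶ Y, P.complex.d (i + 1) i ≫ f = 0 →
        ∃ g : P.complex.X j ⟶ Y, P.complex.d i j ≫ g = f := by
  rw [← ModuleCat.isZero_iff_subsingleton, (P.isoExt (R := R) i Y).isZero_iff,
    ← HomologicalComplex.exactAt_iff_isZero_homology,
    HomologicalComplex.exactAt_iff' _ j i (i + 1) hij (by simp), ShortComplex.moduleCat_exact_iff]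
  exact Iff.rfl

/-- The derived-functor `Ext` and `Abelian.Ext` have the same vanishing, both being computed by a
projective resolution of `X`. -/
theorem old_iff_new (i : ℕ) :
    Subsingleton (((_root_.Ext R (ModuleCat.{0} R) i).obj (op X)).obj Y) ↔
      Subsingleton (Abelian.Ext X Y i) := by
  let P := projectiveResolution X
  cases i with
  | zero =>
    rw [old_iff_exact X Y 0 0 (by simp) P, Abelian.Ext.homEquiv₀.subsingleton_congr]
    constructor
    · intro h
      have key : ∀ f : ((ChainComplex.single₀ (ModuleCat.{0} R)).obj X).X 0 ⟶ Y, f = 0 := by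
        intro f
        obtain ⟨g, hg⟩ := h (P.π.f 0 ≫ f) (by
          rw [← Category.assoc, P.complex_d_comp_π_f_zero, Limits.zero_comp])
        rw [P.complex.shape 0 0 (by simp), Limits.zero_comp] at hg
        rw [← cancel_epi (P.π.f 0), ← hg, Limits.comp_zero]
      exact subsingleton_of_forall_eq 0 key
    · intro h f hf
      refine ⟨0, ?_⟩
      have h1 : P.π.f 0 ≫ P.exact₀.desc f hf = f := P.exact₀.g_desc f hf
      have h2 : P.exact₀.desc f hf = 0 := h.elim _ _
      rw [Limits.comp_zero, ← h1, h2, Limits.comp_zero]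
  | succ i =>
    rw [old_iff_exact X Y (i + 1) i (by simp) P]
    constructor
    · intro h
      refine subsingleton_of_forall_eq 0 fun a => ?_
      obtain ⟨f, hf, rfl⟩ := P.extMk_surjective a (i + 1 + 1) rfl
      exact (P.extMk_eq_zero_iff f _ rfl hf i rfl).2 (h f hf)
    · intro h f hf
      exact (P.extMk_eq_zero_iff f _ rfl hf i rfl).1 (h.elim _ _)

end Bridge
end Dep
end

/-! ### Koszul homology of injective modules -/

noncomputable section
namespace Dep
open Kos Colon

section General
variable {R : Type} [CommRing R] {M N P : Type} [AddCommGroup M] [Module R M] [AddCommGroup N]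
  [Module R N] [AddCommGroup P] [Module R P]

/-- Koszul homology is concentrated in top degree when `x` acts surjectively on the elements killed by
`l'`, for every suffix `x :: l'` of `l`. -/
theorem hv_of_lift (l : List R)
    (h : ∀ x l', (x :: l') <:+ l → ∀ m : M, (∀ y ∈ l', y • m = 0) →
      ∃ q : M, x • q = m ∧ ∀ y ∈ l', y • q = 0) :
    ∀ j e : ℤ, j < l.length → HV (triv M) l j e := by
  induction l with
  | nil => exact fun j e hj => hv_of_neg _ _ (by simpa using hj)
  | cons x l ih =>
    have ih := ih fun y l' hl => h y l' (hl.trans (List.suffix_cons x l))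
    rintro j e hj ⟨a, b⟩ hz hd
    rw [List.length_cons, Nat.cast_add, Nat.cast_one] at hj
    rw [d_cons] at hd
    have e1 : d l a + x • b = 0 := congrArg Prod.fst hd
    have e2 : d l b = 0 := neg_eq_zero.1 (congrArg Prod.snd hd)
    obtain ⟨b', hb', rfl⟩ := ih (j - 1) (e - 1) (by lia) b hz.2 e2
    rw [sub_add_cancel] at hb'
    have hx : x • b' ∈ g (triv M) l j e :=
      smul_mem (triv M) x (fun _ _ _ => AddSubgroup.mem_top _) l _ _ _ hb'
    have hc : d l (a + x • b') = 0 := by rw [map_add, map_smul, e1]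
    have hm : a + x • b' ∈ g (triv M) l j e := add_mem hz.1 hx
    have hb'' : b' ∈ g (triv M) l (j + 1 - 1) (e - 1) := by rwa [add_sub_cancel_right]
    obtain hj | hj := lt_or_eq_of_le (show j ≤ l.length by lia)
    · obtain ⟨a', ha', hda'⟩ := ih j e hj _ hm hc
      refine ⟨((a', -b') : KV M l × KV M l), ⟨ha', (g (triv M) l _ _).neg_mem hb''⟩, ?_⟩
      rw [d_cons, hda', smul_neg, map_neg, neg_neg, add_neg_cancel_right]
    · subst hj
      obtain ⟨m, hm⟩ := (mem_g_top l e _).1 hm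
      obtain ⟨q, rfl, hq⟩ := h x l List.suffix_rfl m ((d_τ l m).1 (by rw [hm, hc]))
      refine ⟨((0, τ l q - b') : KV M l × KV M l), ⟨zero_mem _, (g (triv M) l _ _).sub_mem ?_ hb''⟩, ?_⟩
      · rw [add_sub_cancel_right]
        exact (mem_g_top l _ _).2 ⟨q, rfl⟩
      · rw [τ_smul] at hm
        rw [d_cons, smul_sub, hm, map_sub, (d_τ l q).2 hq, map_zero, zero_add, zero_sub, neg_neg,
          add_sub_cancel_right]

variable {φ : M →ₗ[R] N} {ψ : N →ₗ[R] P}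

theorem gses_triv (hφ : Function.Injective φ) (hψ : Function.Surjective ψ)
    (hex : Function.Exact φ ψ) (l : List R) :
    GSES l (triv M) (triv N) (triv P) φ.toAddMonoidHom ψ.toAddMonoidHom where
  smulφ := fun y _ m => φ.map_smul y m
  smulψ := fun y _ m => ψ.map_smul y m
  inj := hφ
  comp := fun m => (hex _).2 ⟨m, rfl⟩
  memψ := fun _ _ _ => AddSubgroup.mem_top _
  memφ := fun _ _ _ => AddSubgroup.mem_top _
  exact := fun _ m _ h => by
    obtain ⟨a, ha⟩ := (hex m).1 h
    exact ⟨a, AddSubgroup.mem_top _, ha⟩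
  surj := fun _ m _ => by
    obtain ⟨a, ha⟩ := hψ m
    exact ⟨a, AddSubgroup.mem_top _, ha⟩
  ops := fun _ _ _ _ _ => AddSubgroup.mem_top _

/-- For `0 → M → N → P → 0` with `H_{|l|-1}(l; N) = 0`, the group `H_{|l|-1}(l; M)` is the cokernel of the
map of socles `(0 :_N l) → (0 :_P l)`; in particular it vanishes iff that map is onto. -/
theorem hv_one_iff (hφ : Function.Injective φ) (hψ : Function.Surjective ψ)
    (hex : Function.Exact φ ψ) (l : List R) (e : ℤ) (hN : HV (triv N) l (l.length - 1) e) :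
    HV (triv M) l (l.length - 1) e ↔
      ∀ p : P, (∀ x ∈ l, x • p = 0) → ∃ q : N, ψ q = p ∧ ∀ x ∈ l, x • q = 0 := by
  have S := gses_triv hφ hψ hex l
  have hadd : ∀ a : ℤ, a - 1 + 1 = a := fun a => sub_add_cancel a 1
  constructor
  · intro h p hp
    obtain ⟨q, rfl⟩ := hψ p
    have h1 : d l (τ l q) ∈ g (triv N) l (l.length - 1) e :=
      d_mem (triv N) l S.ops _ _ _ ((mem_g_top l e _).2 ⟨q, rfl⟩)
    obtain ⟨a, ha, h2⟩ := kmap_exact (triv M) (triv N) _ _ S.exact l _ _ (d l (τ l q)) h1 (by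
      rw [kmap_d _ l S.smulψ, kmap_τ]
      exact (d_τ l _).2 hp)
    obtain ⟨a', ha', h3⟩ := h a ha (kmap_inj _ S.inj l (by
      rw [kmap_d _ l S.smulφ, h2, d_d, map_zero]))
    rw [hadd] at ha'
    obtain ⟨m, rfl⟩ := (mem_g_top l e _).1 ha'
    refine ⟨q - φ m, ?_, (d_τ l _).1 ?_⟩
    · rw [map_sub, (hex _).2 ⟨m, rfl⟩, sub_zero]
    · rw [map_sub, map_sub, ← h2, ← h3, kmap_d _ l S.smulφ, kmap_τ]
      exact sub_self _
  · intro h a ha hda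
    obtain ⟨b, hb, hdb⟩ := hN (kmap φ.toAddMonoidHom l a) (kmap_mem0 _ _ _ S.memφ l _ _ _ ha)
      (by rw [← kmap_d _ l S.smulφ, hda, map_zero])
    rw [hadd] at hb ⊢
    obtain ⟨q, rfl⟩ := (mem_g_top l e _).1 hb
    obtain ⟨q₀, h1, h2⟩ := h (ψ q) ((d_τ l _).1 (by
      have : τ l (ψ q) = kmap ψ.toAddMonoidHom l (τ l q) := (kmap_τ ψ.toAddMonoidHom l q).symm
      rw [this, ← kmap_d _ l S.smulψ, hdb, kmap_kmap_zero _ _ S.comp]))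
    obtain ⟨m, hm⟩ := (hex (q - q₀)).1 (by rw [map_sub, h1, sub_self])
    refine ⟨τ l m, (mem_g_top l e _).2 ⟨m, rfl⟩, kmap_inj _ S.inj l ?_⟩
    rw [kmap_d _ l S.smulφ, kmap_τ, ← hdb]
    have : φ.toAddMonoidHom m = q - q₀ := hm
    rw [this, map_sub, map_sub, (d_τ l q₀).2 h2, sub_zero]

end General

variable {K : Type} [Field K] {n : ℕ}

/-- Distinct variables form a regular sequence. -/
theorem mem_span_of_X_mul {v : Fin n} {L : List (Fin n)} (hv : v ∉ L) {p : MvPoly K (Fin n)}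
    (h : X v * p ∈ Ideal.span {q | q ∈ Xs K L}) : p ∈ Ideal.span {q | q ∈ Xs K L} := by
  have key : ∀ q ∈ Ideal.span {q | q ∈ Xs K L}, ∀ r : MvPoly K (Fin n),
      δ v (r * q) ∈ Ideal.span {q | q ∈ Xs K L} := by
    intro q hq
    induction hq using Submodule.span_induction with
    | mem q hq =>
      intro r
      obtain ⟨w, hw, rfl⟩ := List.mem_map.1 hq
      rw [mul_comm, δ_X_ne (by rintro rfl; exact hv hw)]
      exact Ideal.mul_mem_right _ _ (Ideal.subset_span hq)
    | zero => intro r; rw [mul_zero, map_zero]; exact zero_mem _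
    | add a b _ _ ha hb => intro r; rw [mul_add, map_add]; exact add_mem (ha r) (hb r)
    | smul a q _ h => intro r; rw [smul_eq_mul, ← mul_assoc]; exact h _
  have := key _ h 1
  rwa [one_mul, δ_X] at this

/-- The Koszul homology of an injective module is concentrated in top degree: multiplication by `X v` is
injective on `R/(L')` for `v ∉ L'`, hence surjective on `Hom(R/(L'), Q) = (0 :_Q L')`. -/
theorem hv_injective (Q : Type) [AddCommGroup Q] [Module (MvPoly K (Fin n)) Q]
    [Module.Injective (MvPoly K (Fin n)) Q] {L : List (Fin n)} (hL : L.Nodup) (j e : ℤ)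
    (hj : j < (Xs K L).length) : HV (triv Q) (Xs K L) j e := by
  refine hv_of_lift _ (fun x l' hl m hm => ?_) j e hj
  obtain ⟨v, L', rfl, rfl, hv⟩ : ∃ v L', x = X v ∧ l' = Xs K L' ∧ v ∉ L' := by
    obtain ⟨t, ht⟩ := hl
    obtain ⟨L₁, L₂, rfl, -, h2⟩ := List.map_eq_append_iff.1 ht.symm
    obtain ⟨v, L', rfl, h3, h4⟩ := List.map_eq_cons_iff.1 h2
    exact ⟨v, L', h3.symm, h4.symm, (List.nodup_cons.1 (List.nodup_append.1 hL).2.1).1⟩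
  let J : Ideal (MvPoly K (Fin n)) := Ideal.span {q | q ∈ Xs K L'}
  let f : (MvPoly K (Fin n) ⧸ J) →ₗ[MvPoly K (Fin n)] Q :=
    Submodule.liftQ J (LinearMap.toSpanSingleton _ Q m) (Ideal.span_le.2 fun q hq => by
      simpa using hm q hq)
  obtain ⟨h, hh⟩ := Module.Injective.out (LinearMap.lsmul (MvPoly K (Fin n)) (MvPoly K (Fin n) ⧸ J)
    (X v)) (by
      rw [injective_iff_map_eq_zero]
      intro a ha
      obtain ⟨p, rfl⟩ := Ideal.Quotient.mk_surjective a
      exact Ideal.Quotient.eq_zero_iff_mem.2 (mem_span_of_X_mul hv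
        (Ideal.Quotient.eq_zero_iff_mem.1 ha))) f
  refine ⟨h (Ideal.Quotient.mk J 1), ?_, fun y hy => ?_⟩
  · rw [← map_smul]
    refine (hh (Ideal.Quotient.mk J 1)).trans ?_
    show LinearMap.toSpanSingleton _ Q m 1 = m
    simp
  · rw [← map_smul, mk_smul, mul_one, Ideal.Quotient.eq_zero_iff_mem.2
      (show y ∈ J from Ideal.subset_span hy), map_zero]

end Dep
end

/-! ### Koszul homology and depth -/

noncomputable section
namespace Dep
open Kos Colon

variable {K : Type} [Field K] {n : ℕ}

/-- The residue module `R/m`. Maps out of it are the elements killed by all variables. -/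
abbrev res (K : Type) [Field K] (n : ℕ) : ModuleCat.{0} (MvPoly K (Fin n)) :=
  ModuleCat.of (MvPoly K (Fin n)) (MvPoly K (Fin n) ⧸ maxIdeal K (Fin n))

theorem exists_hom (M : ModuleCat.{0} (MvPoly K (Fin n))) (m : M)
    (hm : ∀ v : Fin n, (X v : MvPoly K (Fin n)) • m = 0) :
    ∃ f : res K n ⟶ M, f.hom (Ideal.Quotient.mk _ 1) = m := by
  refine ⟨ModuleCat.ofHom (Submodule.liftQ (maxIdeal K (Fin n))
    (LinearMap.toSpanSingleton _ M m) (Ideal.span_le.2 ?_)), ?_⟩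
  · rintro _ ⟨v, rfl⟩
    exact (LinearMap.toSpanSingleton_apply _ _ _ _).trans (hm v)
  · show LinearMap.toSpanSingleton _ M m 1 = m
    simp

theorem hom_ext {M : ModuleCat.{0} (MvPoly K (Fin n))} {f f' : res K n ⟶ M}
    (h : f.hom (Ideal.Quotient.mk _ 1) = f'.hom (Ideal.Quotient.mk _ 1)) : f = f' := by
  apply ModuleCat.hom_ext
  apply LinearMap.ext
  intro a
  obtain ⟨p, rfl⟩ := Ideal.Quotient.mk_surjective a
  have : Ideal.Quotient.mk (maxIdeal K (Fin n)) p = p • Ideal.Quotient.mk _ 1 := by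
    rw [mk_smul, mul_one]
  rw [this, map_smul, map_smul, h]

theorem X_smul_hom {M : ModuleCat.{0} (MvPoly K (Fin n))} (f : res K n ⟶ M) (v : Fin n) :
    (X v : MvPoly K (Fin n)) • f.hom (Ideal.Quotient.mk _ 1) = 0 := by
  rw [← map_smul, mk_smul, mul_one, Ideal.Quotient.eq_zero_iff_mem.2
    (show X v ∈ maxIdeal K (Fin n) from Ideal.subset_span ⟨v, rfl⟩), map_zero]

section Shift

variable {S : ShortComplex (ModuleCat.{0} (MvPoly K (Fin n)))}
  (A : ModuleCat.{0} (MvPoly K (Fin n)))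

theorem ext_one_iff (hS : S.ShortExact) [Injective S.X₂] :
    Subsingleton (Abelian.Ext A S.X₁ 1) ↔
    ∀ f : A ⟶ S.X₃, ∃ f' : A ⟶ S.X₂, f' ≫ S.g = f := by
  constructor
  · intro h f
    obtain ⟨y, hy⟩ := Abelian.Ext.covariant_sequence_exact₃ A hS (Abelian.Ext.mk₀ f) (zero_add 1)
      (h.elim _ _)
    obtain ⟨f', rfl⟩ := (Abelian.Ext.mk₀_bijective A S.X₂).2 y
    rw [Abelian.Ext.mk₀_comp_mk₀] at hy
    exact ⟨f', (Abelian.Ext.mk₀_bijective _ _).1 hy⟩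
  · intro h
    refine subsingleton_of_forall_eq 0 fun a => ?_
    obtain ⟨y, rfl⟩ := Abelian.Ext.covariant_sequence_exact₁ A hS a
      (Abelian.Ext.eq_zero_of_injective _) (zero_add 1)
    obtain ⟨f, rfl⟩ := (Abelian.Ext.mk₀_bijective A S.X₃).2 y
    obtain ⟨f', rfl⟩ := h f
    rw [← Abelian.Ext.mk₀_comp_mk₀, Abelian.Ext.comp_assoc_of_second_deg_zero,
      ShortComplex.ShortExact.comp_extClass, Abelian.Ext.comp_zero]

theorem ext_succ_iff (hS : S.ShortExact) [Injective S.X₂] (i : ℕ) :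
    Subsingleton (Abelian.Ext A S.X₁ (i + 1 + 1)) ↔
    Subsingleton (Abelian.Ext A S.X₃ (i + 1)) := by
  constructor
  · intro h
    refine subsingleton_of_forall_eq 0 fun a => ?_
    obtain ⟨y, rfl⟩ := Abelian.Ext.covariant_sequence_exact₃ A hS a rfl (h.elim _ _)
    rw [Abelian.Ext.eq_zero_of_injective y, Abelian.Ext.zero_comp]
  · intro h
    refine subsingleton_of_forall_eq 0 fun a => ?_
    obtain ⟨y, rfl⟩ := Abelian.Ext.covariant_sequence_exact₁ A hS a
      (Abelian.Ext.eq_zero_of_injective _) rfl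
    rw [h.elim y 0, Abelian.Ext.zero_comp]

end Shift

theorem forall_Xs {L : List (Fin n)} (hL : ∀ w, w ∈ L) {p : MvPoly K (Fin n) → Prop} :
    (∀ x ∈ Xs K L, p x) ↔ ∀ v, p (X v) := by
  constructor
  · exact fun h v => h _ (List.mem_map.2 ⟨v, hL v, rfl⟩)
  · intro h x hx
    obtain ⟨v, -, rfl⟩ := List.mem_map.1 hx
    exact h v

/-- `Ext^i(R/m, M)` vanishes iff `H_{n-i}(x; M)` does. In degree 0 both are the socle of `M`; then one
shifts dimensions along an embedding of `M` in an injective module, on which both sides vanish. The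
internal degree `e` is irrelevant, the grading being trivial. -/
theorem ext_iff_hv {L : List (Fin n)} (hL : L.Nodup) (hL' : ∀ w, w ∈ L) (e : ℤ) (i : ℕ) :
    ∀ M : ModuleCat.{0} (MvPoly K (Fin n)), Subsingleton (Abelian.Ext (res K n) M i) ↔
      HV (triv M) (Xs K L) ((Xs K L).length - i) e := by
  induction i with
  | zero =>
    intro M
    rw [Abelian.Ext.homEquiv₀.subsingleton_congr, Nat.cast_zero, sub_zero, hv_top_iff]
    constructor
    · intro h m hm
      obtain ⟨f, rfl⟩ := exists_hom M m ((forall_Xs hL').1 hm)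
      rw [h.elim f 0]
      rfl
    · intro h
      exact subsingleton_of_forall_eq 0 fun f =>
        hom_ext (h _ ((forall_Xs hL').2 (X_smul_hom f)))
  | succ i ih =>
    intro M
    obtain ⟨S, hS, hinj, rfl⟩ : ∃ S : ShortComplex (ModuleCat.{0} (MvPoly K (Fin n))),
        S.ShortExact ∧ Injective S.X₂ ∧ S.X₁ = M := by
      refine ⟨ShortComplex.mk (Injective.ι M) (Limits.cokernel.π (Injective.ι M))
        (Limits.cokernel.condition _), ?_, inferInstanceAs (Injective (Injective.under M)), rfl⟩
      exact { exact := ShortComplex.exact_cokernel _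
              mono_f := inferInstanceAs (Mono (Injective.ι M))
              epi_g := inferInstanceAs (Epi (Limits.cokernel.π (Injective.ι M))) }
    have : Module.Injective (MvPoly K (Fin n)) S.X₂ :=
      Module.injective_module_of_injective_object (inj := hinj) ..
    have hQ := hv_injective (K := K) S.X₂ hL
    have h1 : Function.Injective S.f.hom := hS.moduleCat_injective_f
    have h2 : Function.Surjective S.g.hom := hS.moduleCat_surjective_g
    have h3 : Function.Exact S.f.hom S.g.hom :=
      (ShortComplex.ShortExact.moduleCat_exact_iff_function_exact S).1 hS.exact
    cases i with
    | zero =>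
      rw [zero_add, ext_one_iff _ hS, Nat.cast_one, hv_one_iff h1 h2 h3 _ _ (hQ _ _ (by lia))]
      constructor
      · intro h p hp
        obtain ⟨f, rfl⟩ := exists_hom S.X₃ p ((forall_Xs hL').1 hp)
        obtain ⟨f', rfl⟩ := h f
        exact ⟨f'.hom (Ideal.Quotient.mk _ 1), rfl, (forall_Xs hL').2 (X_smul_hom f')⟩
      · intro h f
        obtain ⟨q, hq, hq'⟩ := h _ ((forall_Xs hL').2 (X_smul_hom f))
        obtain ⟨f', rfl⟩ := exists_hom S.X₂ q ((forall_Xs hL').1 hq')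
        exact ⟨f', hom_ext hq⟩
    | succ i =>
      rw [ext_succ_iff _ hS, ih]
      have T := gses_triv h1 h2 h3 (Xs K L)
      push_cast
      constructor
      · intro h
        refine T.hv_left ?_ (hQ _ _ (by lia))
        convert h using 1
        ring
      · intro h
        exact T.hv_right (by ring) h (hQ _ _ (by lia))

theorem 𝓠_top (I : Ideal (MvPoly K (Fin n))) : 𝓠 (fun _ => ⊤) I = triv (MvPoly K (Fin n) ⧸ I) := by
  funext e
  refine eq_top_iff.2 fun m _ => ?_
  obtain ⟨p, rfl⟩ := Ideal.Quotient.mk_surjective m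
  exact ⟨p, AddSubgroup.mem_top _, rfl⟩

/-- `Ext^j(R/m, R/I) = 0` for all `j ≤ i`, that is, `depth R/I > i`. -/
def ExtVanish (i : ℕ) (I : Ideal (MvPoly K (Fin n))) : Prop :=
  ∀ j ≤ i, Subsingleton (Abelian.Ext (res K n)
    (ModuleCat.of (MvPoly K (Fin n)) (MvPoly K (Fin n) ⧸ I)) j)

theorem extVanish_colon (i : ℕ) (I J : Ideal (MvPoly K (Fin n))) (v : Fin n) (hI : Mon I)
    (hJ : ∀ p, p ∈ J ↔ X v * p ∈ I) (h : ExtVanish i I) : ExtVanish i J := by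
  obtain ⟨L, hL, hL'⟩ := Reg.exists_list v
  have H : ∀ t e : ℤ, ((Xs K (v :: L)).length : ℤ) - i ≤ t →
      HV (𝓠 (fun _ => ⊤) I) (Xs K (v :: L)) t e := by
    intro t e ht
    obtain ht' | ht' := lt_or_ge ((Xs K (v :: L)).length : ℤ) t
    · exact hv_of_gt _ _ ht'
    · have := (ext_iff_hv hL hL' e (((Xs K (v :: L)).length : ℤ) - t).toNat _).1 (h _ (by lia))
      rw [Int.toNat_of_nonneg (by lia), sub_sub_cancel] at this
      rw [𝓠_top]
      exact this
  intro j hj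
  rw [ext_iff_hv hL hL' 0 j]
  have := hv_colon (𝓗 := fun _ => ⊤) (fun _ _ _ _ => AddSubgroup.mem_top _)
    (fun _ _ _ _ => AddSubgroup.mem_top _) hI hJ L (List.nodup_cons.1 hL).1
    ((Xs K (v :: L)).length - j) 0 (H _ _ (by lia)) (H _ _ (by lia)) (H _ _ (by lia))
  rwa [𝓠_top] at this

theorem depthQ_le {I J : Ideal (MvPoly K (Fin n))} (h : ∀ i, ExtVanish i I → ExtVanish i J) :
    depthQ K (Fin n) I ≤ depthQ K (Fin n) J := by
  refine le_sInf ?_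
  rintro _ ⟨i, rfl, hi⟩
  by_contra hlt
  refine not_subsingleton_iff_nontrivial.2 hi ((old_iff_new _ _ i).2 (h i (fun j hj => ?_) i le_rfl))
  rw [← old_iff_new]
  by_contra hns
  have hle : depthQ K (Fin n) I ≤ j := sInf_le ⟨j, rfl, not_subsingleton_iff_nontrivial.1 hns⟩
  exact hlt (hle.trans (by exact_mod_cast hj))

end Dep

end

/-- the powers of the edge ideal of an unmixed clutter with the
max-flow min-cut property have non-increasing depth and non-decreasing regularity. -/
theorem stmt13 (K : Type) [Field K] (n : ℕ) (C : Clutter n)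
    (hunm : C.Unmixed) (hmfmc : C.HasMFMC) :
    ∀ k : ℕ, 1 ≤ k →
      depthQ K (Fin n) (Clutter.edgeIdeal K C ^ k) ≥
        depthQ K (Fin n) (Clutter.edgeIdeal K C ^ (k + 1)) ∧
      CMreg K (Fin n) (Clutter.edgeIdeal K C ^ k) ≤
        CMreg K (Fin n) (Clutter.edgeIdeal K C ^ (k + 1)) := by
  intro k hk
  by_cases hne : C.edges.Nonempty
  · obtain ⟨E, hE⟩ := Clutter.exists_colon (K := K) hunm hmfmc hne k
    have hmon := hmfmc.mon (K := K) (k + 1)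
    exact ⟨Dep.depthQ_le fun i => Reg.colon_induction (Dep.extVanish_colon i) E _ _ hmon hE,
      Reg.cmreg_le hmon fun s => Reg.colon_induction (Q := fun I => ResBound K (Fin n) I s)
        (fun I J v hI hJ h => Reg.resBound_colon hI hJ h) E _ _ hmon hE⟩
  · rw [Clutter.edgeIdeal_eq_bot hne, ← Ideal.zero_eq_bot, zero_pow (by lia), zero_pow (by lia)]
    exact ⟨le_rfl, le_rfl⟩
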